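/- Let R be a Noetherian ring, 𝔞 an ideal, M a finitely generated R-module, and t ≥ 0 an integer such that H^i_𝔞(M) is weakly Laskerian for all i ≤ t. Then H^i_𝔞(M) is 𝔞-cofinite for all i ≤ t, and the R-modules Hom_R(R/𝔞, H^{t+1}_𝔞(M)) and Ext^1_R(R/𝔞, H^{t+1}_𝔞(M)) are finitely generated; in particular Ass_R(H^{t+1}_𝔞(M)) is finite. -/

import Mathlib

open CategoryTheory

universe u

variable (R : Type u) [CommRing R]

/-- The `i`-th Ext module `Ext^i_R(N, M)` of `R`-modules. -/
noncomputable def extModule (i : ℕ) (N M : ModuleCat.{u} R) : ModuleCat.{u} R :=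
  ((Ext R (ModuleCat.{u} R) i).obj (Opposite.op N)).obj M

/-- A module is weakly Laskerian if every quotient has finitely many associated primes. -/
def IsWeaklyLaskerian (M : Type u) [AddCommGroup M] [Module R M] : Prop :=
  ∀ N : Submodule R M, (associatedPrimes R (M ⧸ N)).Finite

/-- `M` is `𝔞`-cofinite: `Supp M ⊆ V(𝔞)` and all `Ext^i_R(R/𝔞, M)` are finitely generated. -/
def IsCofinite (𝔞 : Ideal R) (M : ModuleCat.{u} R) : Prop :=
  Module.support R M ⊆ PrimeSpectrum.zeroLocus (𝔞 : Set R) ∧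
    ∀ i : ℕ, Module.Finite R (extModule R i (ModuleCat.of R (R ⧸ 𝔞)) M)

/-- `M` is `𝔞`-weakly cofinite: `Supp M ⊆ V(𝔞)` and all `Ext^i_R(R/𝔞, M)` are weakly
Laskerian. -/
def IsWeaklyCofinite (𝔞 : Ideal R) (M : ModuleCat.{u} R) : Prop :=
  Module.support R M ⊆ PrimeSpectrum.zeroLocus (𝔞 : Set R) ∧
    ∀ i : ℕ, IsWeaklyLaskerian R (extModule R i (ModuleCat.of R (R ⧸ 𝔞)) M)

/-- The Krull dimension of the support of a module. -/
noncomputable def suppDim (M : Type u) [AddCommGroup M] [Module R M] : WithBot ℕ∞ :=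
  Order.krullDim (Module.support R M)

/-- The cohomological dimension `cd(𝔞, M) = sup {i | H^i_𝔞(M) ≠ 0}`, as an element of `ℕ∞`. -/
noncomputable def cohomologicalDim (𝔞 : Ideal R) (M : ModuleCat.{u} R) : ℕ∞ :=
  ⨆ i ∈ {i : ℕ | Nontrivial ((localCohomology 𝔞 i).obj M)}, (i : ℕ∞)

/-- `p` is an attached prime of `M`: `p` is prime and is the annihilator of a quotient
of `M`. -/
def IsAttachedPrime (M : Type u) [AddCommGroup M] [Module R M] (p : Ideal R) : Prop :=
  p.IsPrime ∧ ∃ N : Submodule R M, p = Module.annihilator R (M ⧸ N)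

/-!
A weakly Laskerian module `A` has a finitely generated submodule `N` with `A/N` of finite support:
otherwise submodules can be enlarged step by step to a quotient with infinitely many associated
primes. When `A` is `𝔞`-torsion this makes all `Ext^j(R/𝔞, A)` finitely generated as soon as
`Ext^0` and `Ext^1` are, and for this `A` may be replaced by `A/N`. At primes minimal in a finite
support the localization of `A` is then Artinian, so some `x ∈ 𝔞` and some finitely generated `N'`
remove these primes from the support of `A/(N' + xA)`. As `x` kills every `Ext(R/𝔞, -)`, finiteness
for the kernel and the cokernel of `x` gives it for `A`, and the kernel is treated by Noetherian
induction on its annihilator. By Krull's theorem a prime that strictly contains a prime `q` with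
`V(q)` finite is maximal, so removing primes twice exhausts the support, at the cost of one degree
each time.

For local cohomology, let `J = E/Γ_𝔞(E)` with `E` an injective module containing `M`. All
`Ext(R/𝔞ⁿ, J)` vanish and `M → J` has kernel `Γ_𝔞(M)`, so its cokernel `L` satisfies
`H^i(L) ≅ H^{i+1}(M)`, and `Ext^j(R/𝔞, L)` is finitely generated when `Ext^{j+1}(R/𝔞, M)` and
`Ext^{j+2}(R/𝔞, Γ_𝔞(M))` are. Induction on `t` then reduces to `H^0 = Γ_𝔞`.
-/

section Support

variable {R : Type*} [CommRing R] {M : Type*} [AddCommGroup M] [Module R M]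

theorem mem_support_quotient_iff (N : Submodule R M) (p : PrimeSpectrum R) :
    p ∈ Module.support R (M ⧸ N) ↔ ∃ y : M, N.colon {y} ≤ p.asIdeal := by
  have colon_eq (y : M) : (Submodule.span R {N.mkQ y}).annihilator = N.colon {y} := by
    ext t
    simp [← Submodule.Quotient.mk_smul]
  simp only [Module.mem_support_iff_exists_annihilator, N.mkQ_surjective.exists, colon_eq]

theorem support_quotient_anti {N N' : Submodule R M} (h : N ≤ N') :
    Module.support R (M ⧸ N') ⊆ Module.support R (M ⧸ N) :=
  Module.support_subset_of_surjective (Submodule.factor h) (Submodule.factor_surjective h)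

theorem mem_support_of_mem_associatedPrimes {p : PrimeSpectrum R}
    (hp : p.asIdeal ∈ associatedPrimes R M) : p ∈ Module.support R M := by
  obtain ⟨-, x, hx⟩ := hp
  refine Module.mem_support_iff'.2 ⟨x, fun r hr hrx => hr ?_⟩
  rw [hx]
  exact Ideal.le_radical (by simpa [Submodule.mem_colon_singleton] using hrx)

theorem exists_mem_associatedPrimes_le [IsNoetherianRing R] {p : PrimeSpectrum R}
    (hp : p ∈ Module.support R M) : ∃ q ∈ associatedPrimes R M, q ≤ p.asIdeal := by
  obtain ⟨x, hx⟩ := Module.mem_support_iff_exists_annihilator.1 hp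
  obtain ⟨q, hq, hqp⟩ := Ideal.exists_minimalPrimes_le hx
  exact ⟨q, associatedPrimes.subset_of_injective (Submodule.injective_subtype _)
    (Module.associatedPrimes.minimalPrimes_annihilator_subset_associatedPrimes R _ hq), hqp⟩

theorem mem_support_of_vanishingIdeal_le [IsNoetherianRing R]
    (hM : (associatedPrimes R M).Finite) {p : PrimeSpectrum R}
    (hp : PrimeSpectrum.vanishingIdeal (Module.support R M) ≤ p.asIdeal) :
    p ∈ Module.support R M := by
  have inf_le : hM.toFinset.inf id ≤ p.asIdeal := by
    refine le_trans (fun r hr => ?_) hp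
    rw [PrimeSpectrum.mem_vanishingIdeal]
    intro q hq
    obtain ⟨q', hq', hle⟩ := exists_mem_associatedPrimes_le hq
    exact hle (Finset.inf_le (f := id) (hM.mem_toFinset.2 hq') hr)
  obtain ⟨q, hq, hqp⟩ := (Ideal.IsPrime.inf_le' p.2).1 inf_le
  have hq_ass := hM.mem_toFinset.1 hq
  exact Module.mem_support_mono (p := ⟨q, hq_ass.1⟩) hqp
    (mem_support_of_mem_associatedPrimes hq_ass)

end Support

section InfiniteZeroLocus

variable {R : Type*} [CommRing R]

theorem exists_isPrime_infinite_zeroLocus [IsNoetherianRing R] {J : Ideal R}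
    (hJ : (PrimeSpectrum.zeroLocus (J : Set R)).Infinite) :
    ∃ P : Ideal R, P.IsPrime ∧ J ≤ P ∧ (PrimeSpectrum.zeroLocus (P : Set R)).Infinite ∧
      ∀ r ∉ P, (PrimeSpectrum.zeroLocus ((P ⊔ Ideal.span {r} : Ideal R) : Set R)).Finite := by
  obtain ⟨P, ⟨hJP, hP⟩, P_max⟩ := set_has_maximal_iff_noetherian.2 ‹IsNoetherianRing R›
    {I : Ideal R | J ≤ I ∧ (PrimeSpectrum.zeroLocus (I : Set R)).Infinite} ⟨J, le_rfl, hJ⟩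
  have finite_sup (r : R) (hr : r ∉ P) :
      (PrimeSpectrum.zeroLocus ((P ⊔ Ideal.span {r} : Ideal R) : Set R)).Finite := by
    by_contra h
    refine P_max _ ⟨le_sup_of_le_left hJP, h⟩ (left_lt_sup.2 fun hle => hr ?_)
    exact hle (Ideal.mem_span_singleton_self r)
  refine ⟨P, Ideal.isPrime_iff.2 ⟨?_, fun {a b} hab => ?_⟩, hJP, hP, finite_sup⟩
  · rintro rfl
    simp at hP
  · by_contra! h
    refine hP (((finite_sup a h.1).union (finite_sup b h.2)).subset fun p hp => ?_)
    exact (p.2.mem_or_mem (hp hab)).imp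
      (fun ha => sup_le hp ((Ideal.span_singleton_le_iff_mem _).2 ha))
      (fun hb => sup_le hp ((Ideal.span_singleton_le_iff_mem _).2 hb))

theorem exists_lt_notMem_of_infinite_zeroLocus {P : Ideal R} [P.IsPrime]
    (hP : (PrimeSpectrum.zeroLocus (P : Set R)).Infinite) {r : R}
    (hr : (PrimeSpectrum.zeroLocus ((P ⊔ Ideal.span {r} : Ideal R) : Set R)).Finite) :
    ∃ q : Ideal R, q.IsPrime ∧ P < q ∧ r ∉ q := by
  obtain ⟨q, hPq, hq⟩ := hP.exists_notMem_finite (hr.insert ⟨P, ‹_›⟩)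
  rw [Set.mem_insert_iff, not_or] at hq
  refine ⟨q.asIdeal, q.2, lt_of_le_of_ne hPq fun h => hq.1 (PrimeSpectrum.ext h.symm), fun h => ?_⟩
  exact hq.2 (sup_le hPq ((Ideal.span_singleton_le_iff_mem _).2 h))

end InfiniteZeroLocus

section WeaklyLaskerian

variable {R : Type*} [CommRing R] {M : Type*} [AddCommGroup M] [Module R M]

theorem exists_pow_smul_mem_imp_mem [IsNoetherianRing R] {N U : Submodule R M} {r : R}
    (hr : ∀ n ∈ N, r • n ∈ U) (y : M) :
    ∃ k : ℕ, ∀ t : R, t • r ^ k • y ∈ N → t • r ^ k • y ∈ U := by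
  have colon_mono : Monotone fun k => N.colon {r ^ k • y} := by
    refine monotone_nat_of_le_succ fun k t ht => ?_
    rw [Submodule.mem_colon_singleton] at ht ⊢
    rw [pow_succ', mul_smul, smul_comm]
    exact N.smul_mem r ht
  obtain ⟨k, hk⟩ := monotone_stabilizes_iff_noetherian.2 ‹IsNoetherianRing R› ⟨_, colon_mono⟩
  refine ⟨k + 1, fun t ht => ?_⟩
  have t_mem : t ∈ N.colon {r ^ k • y} :=
    (hk (k + 1) k.le_succ).ge (Submodule.mem_colon_singleton.2 ht)
  rw [pow_succ', mul_smul, smul_comm]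
  exact hr _ (Submodule.mem_colon_singleton.1 t_mem)

theorem inf_sup_smul_span_singleton_le {N U : Submodule R M} (hU : U ≤ N) (q : Ideal R) {z : M}
    (hz : ∀ t : R, t • z ∈ N → t • z ∈ U) : N ⊓ (U ⊔ q • Submodule.span R {z}) ≤ U := by
  rw [inf_comm, sup_inf_assoc_of_le _ hU]
  refine sup_le le_rfl ?_
  rintro _ ⟨hv, hvN⟩
  obtain ⟨t, -, rfl⟩ := Submodule.mem_smul_span_singleton.1 hv
  exact hz t hvN

theorem colon_sup_smul_span_singleton {U : Submodule R M} {q : Ideal R} {z : M}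
    (h : U.colon {z} ≤ q) : (U ⊔ q • Submodule.span R {z}).colon {z} = q := by
  ext s
  rw [Submodule.mem_colon_singleton]
  refine ⟨fun hs => ?_, fun hs => Submodule.mem_sup_right
    (Submodule.smul_mem_smul hs (Submodule.mem_span_singleton_self z))⟩
  obtain ⟨u, hu, v, hv, huv⟩ := Submodule.mem_sup.1 hs
  obtain ⟨t, ht, rfl⟩ := Submodule.mem_smul_span_singleton.1 hv
  have sub_mem : s - t ∈ q := h (Submodule.mem_colon_singleton.2
    (by rwa [sub_smul, ← huv, add_sub_cancel_right]))
  simpa using q.add_mem sub_mem ht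

theorem inf_iSup_le_of_inf_succ_le {N U : ℕ → Submodule R M} (hN : Monotone N) (hU : Monotone U)
    (h : ∀ n, N n ⊓ U (n + 1) ≤ U n) (n : ℕ) : N n ⊓ ⨆ k, U k ≤ U n := by
  have inf_le (k : ℕ) : N n ⊓ U (n + k) ≤ U n := by
    induction k with
    | zero => exact inf_le_right
    | succ k ih =>
      exact le_trans (le_inf inf_le_left
        ((inf_le_inf_right _ (hN (Nat.le_add_right n k))).trans (h (n + k)))) ih
  rintro v ⟨hv, hvU⟩
  obtain ⟨m, hm⟩ := (Submodule.mem_iSup_of_directed _ hU.directed_le).1 hvU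
  exact inf_le m ⟨hv, hU (Nat.le_add_left m n) hm⟩

/-- A finite stage in the construction of a quotient of `M` with infinitely many associated primes
above `P`: a finitely generated submodule `N`, the part `U` of it to be divided out, and an element
`r ∉ P` killing `N / U`. -/
structure TorsionStage (P : Ideal R) (M : Type*) [AddCommGroup M] [Module R M] where
  N : Submodule R M
  U : Submodule R M
  r : R
  fg : N.FG
  le : U ≤ N
  notMem : r ∉ P
  smul_mem : ∀ n ∈ N, r • n ∈ U

/-- `S'` enlarges the stage `S` by a vector `z` whose annihilator modulo `S'.U` is `q`, without
dividing out anything new from `S.N`. -/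
structure TorsionStage.Adjoins {P : Ideal R} (S S' : TorsionStage P M) (q : Ideal R) (z : M) :
    Prop where
  N_le : S.N ≤ S'.N
  U_le : S.U ≤ S'.U
  inf_le : S.N ⊓ S'.U ≤ S.U
  mem : z ∈ S'.N
  colon_eq : S'.U.colon {z} = q

theorem TorsionStage.exists_adjoins [IsNoetherianRing R] {P : Ideal R} [hP : P.IsPrime]
    (S : TorsionStage P M) {y : M} (hy : S.N.colon {y} ≤ P) {q : Ideal R} [hq : q.IsPrime]
    (hPq : P < q) (hr : S.r ∉ q) : ∃ (S' : TorsionStage P M) (z : M), S.Adjoins S' q z := by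
  obtain ⟨k, hk⟩ := exists_pow_smul_mem_imp_mem S.smul_mem y
  obtain ⟨w, hwq, hwP⟩ := SetLike.exists_of_lt hPq
  set z := S.r ^ k • y
  have hz : z ∈ Submodule.span R {y} :=
    Submodule.smul_mem _ _ (Submodule.mem_span_singleton_self y)
  have colon_le : S.U.colon {z} ≤ q := fun t ht => by
    have : t * S.r ^ k ∈ S.N.colon {y} := by
      rw [Submodule.mem_colon_singleton] at ht ⊢
      rw [mul_smul]
      exact S.le ht
    exact (hq.mem_or_mem (hPq.le (hy this))).resolve_right fun h => hr (hq.mem_of_pow_mem _ h)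
  refine ⟨⟨S.N ⊔ Submodule.span R {y}, S.U ⊔ q • Submodule.span R {z}, w * S.r ^ (k + 1),
    S.fg.sup (Submodule.fg_span_singleton y), sup_le_sup S.le ?_, ?_, ?_⟩, z,
    ⟨le_sup_left, le_sup_left, inf_sup_smul_span_singleton_le S.le q hk,
      Submodule.mem_sup_right hz, colon_sup_smul_span_singleton colon_le⟩⟩
  · exact Submodule.smul_le_right.trans ((Submodule.span_singleton_le_iff_mem _ _).2 hz)
  · exact fun h => (hP.mem_or_mem h).elim hwP fun h => S.notMem (hP.mem_of_pow_mem _ h)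
  · intro v hv
    obtain ⟨n, hn, m, hm, rfl⟩ := Submodule.mem_sup.1 hv
    obtain ⟨c, rfl⟩ := Submodule.mem_span_singleton.1 hm
    have smul_n : (w * S.r ^ (k + 1)) • n = (w * S.r ^ k) • S.r • n := by
      rw [smul_smul, pow_succ, mul_assoc]
    have smul_y : (w * S.r ^ (k + 1)) • c • y = (w * (S.r * c)) • z := by
      simp only [z, smul_smul, pow_succ]
      ring_nf
    rw [smul_add, smul_n, smul_y]
    exact add_mem (Submodule.mem_sup_left (S.U.smul_mem _ (S.smul_mem n hn)))
      (Submodule.mem_sup_right (Submodule.smul_mem_smul (q.mul_mem_right _ hwq)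
        (Submodule.mem_span_singleton_self z)))

theorem TorsionStage.infinite_associatedPrimes {P : Ideal R} {S : ℕ → TorsionStage P M}
    {q : ℕ → Ideal R} {z : ℕ → M} (hq : ∀ n, (q n).IsPrime) (hr : ∀ n, (S n).r ∉ q n)
    (h : ∀ n, (S n).Adjoins (S (n + 1)) (q n) (z n)) :
    (associatedPrimes R (M ⧸ ⨆ n, (S n).U)).Infinite := by
  set U := ⨆ n, (S n).U
  have N_mono : Monotone fun n => (S n).N := monotone_nat_of_le_succ fun n => (h n).N_le
  have U_mono : Monotone fun n => (S n).U := monotone_nat_of_le_succ fun n => (h n).U_le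
  have U_le (n : ℕ) : (S n).U ≤ U := le_iSup (fun n => (S n).U) n
  have colon_eq (n : ℕ) : U.colon {z n} = q n := by
    rw [← (h n).colon_eq]
    ext s
    simp only [Submodule.mem_colon_singleton]
    exact ⟨fun hs => inf_iSup_le_of_inf_succ_le N_mono U_mono (fun n => (h n).inf_le) (n + 1)
      ⟨Submodule.smul_mem _ s (h n).mem, hs⟩, fun hs => U_le _ hs⟩
  have q_inj : Function.Injective q := by
    refine .of_lt_imp_ne fun i j hij hqij => hr j ?_
    rw [← hqij, ← colon_eq, Submodule.mem_colon_singleton]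
    exact U_le j ((S j).smul_mem _ (N_mono hij (h i).mem))
  refine Set.infinite_of_injective_forall_mem q_inj fun n => ⟨hq n, U.mkQ (z n), ?_⟩
  have bot_colon : (⊥ : Submodule R (M ⧸ U)).colon {U.mkQ (z n)} = q n := by
    rw [← colon_eq]
    ext s
    simp [Submodule.mem_colon_singleton, ← Submodule.Quotient.mk_smul]
  rw [bot_colon, (hq n).radical]

theorem exists_infinite_associatedPrimes_quotient [IsNoetherianRing R] {P : Ideal R}
    [hP : P.IsPrime] (hP_inf : (PrimeSpectrum.zeroLocus (P : Set R)).Infinite)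
    (hP_fin : ∀ r ∉ P,
      (PrimeSpectrum.zeroLocus ((P ⊔ Ideal.span {r} : Ideal R) : Set R)).Finite)
    (hsupp : ∀ N : Submodule R M, N.FG → ⟨P, hP⟩ ∈ Module.support R (M ⧸ N)) :
    ∃ U : Submodule R M, (associatedPrimes R (M ⧸ U)).Infinite := by
  have exists_next (S : TorsionStage P M) : ∃ (S' : TorsionStage P M) (q : Ideal R) (z : M),
      q.IsPrime ∧ S.r ∉ q ∧ S.Adjoins S' q z := by
    obtain ⟨q, hq, hPq, hr⟩ := exists_lt_notMem_of_infinite_zeroLocus hP_inf (hP_fin S.r S.notMem)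
    obtain ⟨y, hy⟩ := (mem_support_quotient_iff _ _).1 (hsupp S.N S.fg)
    obtain ⟨S', z, h⟩ := S.exists_adjoins hy hPq hr
    exact ⟨S', q, z, hq, hr, h⟩
  choose next q z hq hr h using exists_next
  let S₀ : TorsionStage P M :=
    ⟨⊥, ⊥, 1, Submodule.fg_bot, le_rfl, hP.one_notMem, by simp⟩
  let S (n : ℕ) : TorsionStage P M := next^[n] S₀
  refine ⟨_, TorsionStage.infinite_associatedPrimes (S := S) (fun n => hq (S n))
    (fun n => hr (S n)) (z := fun n => z (S n)) fun n => ?_⟩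
  simpa only [S, Function.iterate_succ_apply'] using h (S n)

theorem IsWeaklyLaskerian.exists_fg_finite_support_quotient {R M : Type u} [CommRing R]
    [IsNoetherianRing R] [AddCommGroup M] [Module R M] (hM : IsWeaklyLaskerian R M) :
    ∃ N : Submodule R M, N.FG ∧ (Module.support R (M ⧸ N)).Finite := by
  by_contra! hinf
  let J (N : Submodule R M) : Ideal R := PrimeSpectrum.vanishingIdeal (Module.support R (M ⧸ N))
  obtain ⟨_, ⟨N₀, hN₀, rfl⟩, J_max⟩ := set_has_maximal_iff_noetherian.2 ‹IsNoetherianRing R›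
    {I | ∃ N : Submodule R M, N.FG ∧ J N = I} ⟨_, ⊥, Submodule.fg_bot, rfl⟩
  have hJ : (PrimeSpectrum.zeroLocus (J N₀ : Set R)).Infinite :=
    Set.Infinite.mono (PrimeSpectrum.subset_zeroLocus_vanishingIdeal _) (hinf N₀ hN₀)
  obtain ⟨P, hP, hJP, hP_inf, hP_fin⟩ := exists_isPrime_infinite_zeroLocus hJ
  obtain ⟨U, hU⟩ := exists_infinite_associatedPrimes_quotient (M := M) hP_inf hP_fin
    fun N hN => by
      have J_sup : J (N₀ ⊔ N) = J N₀ :=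
        (eq_of_le_of_not_lt (PrimeSpectrum.vanishingIdeal_anti_mono
          (support_quotient_anti le_sup_left)) (J_max _ ⟨_, hN₀.sup hN, rfl⟩)).symm
      exact support_quotient_anti le_sup_right
        (mem_support_of_vanishingIdeal_le (hM _) (J_sup.le.trans hJP))
  exact hU (hM U)

end WeaklyLaskerian

section Melkersson

open Pointwise

theorem exists_forall_ge_eq_of_antitone {α : Type*} [PartialOrder α] [WellFoundedLT α]
    {S : ℕ × ℕ → α} (hS : Antitone S) : ∃ k, ∀ m, k ≤ m → ∀ n, S (m, n) = S (k, n) := by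
  have stabilizes (f : ℕ → α) (hf : Antitone f) : ∃ k, ∀ m, k ≤ m → f m = f k := by
    obtain ⟨k, hk⟩ := WellFoundedGT.monotone_chain_condition
      (⟨fun n => OrderDual.toDual (f n), fun _ _ h => hf h⟩ : ℕ →o αᵒᵈ)
    exact ⟨k, fun m hm => (hk m hm).symm⟩
  obtain ⟨d, hd⟩ := stabilizes (fun m => S (m, m)) fun _ _ h => hS ⟨h, h⟩
  choose a ha using fun n => stabilizes (fun m => S (m, n)) fun _ _ h => hS ⟨h, le_rfl⟩
  refine ⟨max d ((Finset.range d).sup a), fun m hm n => ?_⟩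
  rcases lt_or_ge n d with hn | hn
  · have hk := (Finset.le_sup (f := a) (Finset.mem_range.2 hn)).trans (le_max_right d _)
    exact (ha n m (hk.trans hm)).trans (ha n _ hk).symm
  · refine (hS (Prod.mk_le_mk.2 ⟨hm, le_rfl⟩)).antisymm ?_
    calc S (max d ((Finset.range d).sup a), n)
      _ ≤ S (d, d) := hS ⟨le_max_left _ _, hn⟩
      _ = S (max m n, max m n) := (hd _ (hn.trans (le_max_right _ _))).symm
      _ ≤ S (m, n) := hS ⟨le_max_left _ _, le_max_right _ _⟩

variable {R : Type*} [CommRing R] {B : Type*} [AddCommGroup B] [Module R B]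

theorem le_of_pow_smul_inf_torsionBy_le {x : R} (hx : ∀ b : B, ∃ n : ℕ, x ^ n • b = 0)
    {C C' : Submodule R B} (hle : C' ≤ C)
    (h : ∀ n : ℕ, x ^ n • C ⊓ Submodule.torsionBy R B x ≤ x ^ n • C') : C ≤ C' := by
  have mem_of_pow_smul_eq_zero (k : ℕ) : ∀ c ∈ C, x ^ k • c = 0 → c ∈ C' := by
    induction k with
    | zero => exact fun c _ hc => by simp_all
    | succ k ih =>
      intro c hc hxc
      have hxk : x ^ k • c ∈ x ^ k • C ⊓ Submodule.torsionBy R B x :=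
        ⟨Submodule.smul_mem_pointwise_smul _ _ _ hc,
          (Submodule.mem_torsionBy_iff _ _).2 (by rwa [smul_smul, ← pow_succ'])⟩
      obtain ⟨c', hc', hcc'⟩ := (Submodule.mem_smul_pointwise_iff_exists _ _ _).1 (h k hxk)
      have hsub := ih (c - c') (C.sub_mem hc (hle hc')) (by rw [smul_sub, hcc', sub_self])
      simpa using C'.add_mem hsub hc'
  exact fun c hc => (hx c).elim fun k => mem_of_pow_smul_eq_zero k c hc

theorem isArtinian_of_isArtinian_torsionBy {x : R} (hx : ∀ b : B, ∃ n : ℕ, x ^ n • b = 0)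
    [IsArtinian R (Submodule.torsionBy R B x)] : IsArtinian R B := by
  rw [← monotone_stabilizes_iff_artinian]
  intro f
  let C (n : ℕ) : Submodule R B := OrderDual.ofDual (f n)
  have hC : Antitone C := fun _ _ h => f.monotone h
  have pow_smul_anti (m : ℕ) : Antitone fun n => x ^ n • C m := by
    refine antitone_nat_of_succ_le fun n => ?_
    rw [pow_succ, mul_smul]
    exact Submodule.map_mono (Submodule.smul_le_self_of_tower _ _)
  let S (i : ℕ × ℕ) : Submodule R (Submodule.torsionBy R B x) :=
    (x ^ i.2 • C i.1).comap (Submodule.subtype _)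
  have hS : Antitone S := fun i j h => Submodule.comap_mono
    ((pow_smul_anti j.1 h.2).trans (Submodule.map_mono (hC h.1)))
  obtain ⟨k, hk⟩ := exists_forall_ge_eq_of_antitone hS
  refine ⟨k, fun m hm => le_antisymm (f.monotone hm)
    (le_of_pow_smul_inf_torsionBy_le hx (hC hm) ?_)⟩
  rintro n b ⟨hbC, hbx⟩
  exact (hk m hm n).ge (show (⟨b, hbx⟩ : Submodule.torsionBy R B x) ∈ S (k, n) from hbC)

theorem isArtinian_of_isArtinian_torsionBySet (s : Finset R)
    (hs : ∀ x ∈ s, ∀ b : B, ∃ n : ℕ, x ^ n • b = 0)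
    [IsArtinian R (Submodule.torsionBySet R B (s : Set R))] : IsArtinian R B := by
  classical
  induction s using Finset.induction_on generalizing B with
  | empty =>
    refine isArtinian_of_injective
      (LinearMap.codRestrict (Submodule.torsionBySet R B (∅ : Finset R)) LinearMap.id ?_)
      fun _ _ h => congrArg Subtype.val h
    simp
  | insert x s _ ih =>
    let K := Submodule.torsionBy R B x
    let g : Submodule.torsionBySet R K (s : Set R) →ₗ[R]
        Submodule.torsionBySet R B (insert x s : Finset R) :=
      LinearMap.codRestrict _ (K.subtype ∘ₗ Submodule.subtype _) fun b =>
        (Submodule.mem_torsionBySet_iff _ _).2 fun ⟨a, ha⟩ => (Finset.mem_insert.1 ha).elim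
          (fun h => by subst h; exact b.1.2)
          fun h => congrArg Subtype.val ((Submodule.mem_torsionBySet_iff _ _).1 b.2 ⟨a, h⟩)
    have : IsArtinian R (Submodule.torsionBySet R K (s : Set R)) :=
      isArtinian_of_injective g
      fun _ _ h => Subtype.ext (Subtype.ext (Subtype.mk.inj h))
    have : IsArtinian R K := ih fun y hy b =>
      (hs y (Finset.mem_insert_of_mem hy) b).imp fun n hn => Subtype.ext hn
    exact isArtinian_of_isArtinian_torsionBy (hs x (Finset.mem_insert_self x s))

theorem isArtinian_of_isTorsionBySet {m : Ideal R} [m.IsMaximal] [Module.Finite R B]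
    (h : Module.IsTorsionBySet R B (m : Set R)) : IsArtinian R B := by
  let := Ideal.Quotient.field m
  let := h.module
  have := h.isSemisimpleModule_iff.1 inferInstance
  infer_instance

end Melkersson

section Secondary

open Pointwise

variable {R : Type*} [CommRing R] {B : Type*} [AddCommGroup B] [Module R B]

-- Fitting's lemma splits `D` into the part killed by a power of `r` and the stable image.
theorem mem_radical_annihilator_or_smul_eq_of_supIrred [IsArtinian R B] {D : Submodule R B}
    (hD : SupIrred D) (r : R) : r ∈ D.annihilator.radical ∨ r • D = D := by
  obtain ⟨n, hn, hn0⟩ := ((LinearMap.eventually_codisjoint_ker_pow_range_pow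
    (algebraMap R (Module.End R D) r)).and (Filter.eventually_ne_atTop 0)).exists
  have pow_apply (d : D) : ((algebraMap R (Module.End R D) r ^ n) d : B) = r ^ n • (d : B) := by
    rw [← map_pow, Module.algebraMap_end_apply, Submodule.coe_smul]
  have hsup := congrArg (Submodule.map D.subtype) (codisjoint_iff.1 hn)
  rw [Submodule.map_sup, Submodule.map_subtype_top] at hsup
  refine (hD.2 hsup).imp (fun hker => ⟨n, Submodule.mem_annihilator.2 fun d hd => ?_⟩)
    fun hrange => (Submodule.smul_le_self_of_tower r D).antisymm fun d hd => ?_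
  · obtain ⟨e, he, rfl⟩ := hker.ge hd
    rw [Submodule.coe_subtype, ← pow_apply, LinearMap.mem_ker.1 he, ZeroMemClass.coe_zero]
  · obtain ⟨_, ⟨e, rfl⟩, rfl⟩ := hrange.ge hd
    rw [Submodule.coe_subtype, pow_apply, ← Nat.sub_one_add_one hn0, pow_succ', mul_smul]
    exact Submodule.smul_mem_pointwise_smul _ _ _ (D.smul_mem _ e.2)

theorem isPrime_radical_annihilator_of_supIrred [IsArtinian R B] {D : Submodule R B}
    (hD : SupIrred D) : D.annihilator.radical.IsPrime := by
  refine Ideal.isPrime_iff.2 ⟨fun h => hD.ne_bot ?_, fun {r s} ⟨n, hn⟩ => ?_⟩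
  · rwa [Ideal.radical_eq_top, Submodule.annihilator_eq_top_iff] at h
  · refine (mem_radical_annihilator_or_smul_eq_of_supIrred hD r).imp_right fun hr => ⟨n, ?_⟩
    have hrn : r ^ n • D = D := by
      clear hn
      induction n with
      | zero => rw [pow_zero, one_smul]
      | succ n ih => rw [pow_succ, mul_smul, hr, ih]
    refine Submodule.mem_annihilator.2 fun d hd => ?_
    obtain ⟨e, he, rfl⟩ := (Submodule.mem_smul_pointwise_iff_exists _ _ _).1 (hrn.ge hd)
    rw [smul_smul, ← mul_pow, mul_comm]
    exact Submodule.mem_annihilator.1 hn e he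

theorem fg_torsionBySet_pow [IsNoetherianRing R] {I : Ideal R}
    (h : (Submodule.torsionBySet R B (I : Set R)).FG) (n : ℕ) :
    (Submodule.torsionBySet R B ((I ^ n : Ideal R) : Set R)).FG := by
  induction n with
  | zero =>
    rw [pow_zero, Ideal.one_eq_top, Submodule.top_coe, Submodule.torsionBySet_univ]
    exact Submodule.fg_bot
  | succ n ih =>
    obtain ⟨s, rfl⟩ := IsNoetherian.noetherian I
    let f : B →ₗ[R] (s → B) := LinearMap.pi fun x => LinearMap.lsmul R B x
    apply Submodule.fg_of_fg_map_of_fg_inf_ker f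
    · refine (Submodule.fg_pi fun _ : s => ih).of_le ?_
      rintro _ ⟨b, hb, rfl⟩ x -
      refine (Submodule.mem_torsionBySet_iff _ _).2 fun a => ?_
      have hax : (a : R) * x ∈ Ideal.span (s : Set R) ^ (n + 1) := by
        rw [pow_succ]
        exact Ideal.mul_mem_mul a.2 (Ideal.subset_span x.2)
      simpa [mul_smul, f] using (Submodule.mem_torsionBySet_iff _ _).1 hb ⟨_, hax⟩
    · refine h.of_le fun b hb => ?_
      rw [← Submodule.torsionBySet_eq_torsionBySet_span, Submodule.mem_torsionBySet_iff]
      exact fun x => congrFun (LinearMap.mem_ker.1 hb.2) x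

theorem exists_fg_sup_smul_top_eq_top [IsNoetherianRing R] [IsArtinian R B] {I : Ideal R}
    (hI : (Submodule.torsionBySet R B (I : Set R)).FG) :
    ∃ Q : Set (Ideal R), Q.Finite ∧ (∀ q ∈ Q, q.IsPrime ∧ ¬ I ≤ q) ∧
      ∃ F : Submodule R B, F.FG ∧ ∀ x, (∀ q ∈ Q, x ∉ q) → F ⊔ x • ⊤ = ⊤ := by
  classical
  obtain ⟨s, hs, hirr⟩ := exists_supIrred_decomposition (⊤ : Submodule R B)
  let rad (D : Submodule R B) : Ideal R := D.annihilator.radical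
  refine ⟨rad '' {D ∈ s | ¬ I ≤ rad D}, (s.finite_toSet.subset fun D h => h.1).image _,
    Set.forall_mem_image.2 fun D h => ⟨isPrime_radical_annihilator_of_supIrred (hirr h.1), h.2⟩,
    {D ∈ s | I ≤ rad D}.sup id, Submodule.fg_finset_sup _ _ fun D hD => ?_,
    fun x hx => top_unique ?_⟩
  · obtain ⟨n, hn⟩ := Ideal.exists_pow_le_of_le_radical_of_fg (Finset.mem_filter.1 hD).2
      (IsNoetherian.noetherian I)
    refine (fg_torsionBySet_pow hI n).of_le fun d hd => ?_
    exact (Submodule.mem_torsionBySet_iff _ _).2 fun a =>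
      Submodule.mem_annihilator.1 (hn a.2) d hd
  · refine hs.ge.trans (Finset.sup_le fun D hD => ?_)
    by_cases hID : I ≤ rad D
    · exact le_sup_of_le_left (Finset.le_sup (f := id) (Finset.mem_filter.2 ⟨hD, hID⟩))
    · have hxD := (mem_radical_annihilator_or_smul_eq_of_supIrred (hirr hD) x).resolve_left
        (hx _ ⟨D, ⟨hD, hID⟩, rfl⟩)
      exact le_sup_of_le_right (hxD.ge.trans (Submodule.map_mono le_top))

end Secondary

/-- The module `A` is `I`-torsion: every element is annihilated by a power of the ideal `I`. -/
def IsPowTorsion {R : Type*} [CommRing R] (I : Ideal R) (A : Type*) [AddCommGroup A]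
    [Module R A] : Prop :=
  ∀ a : A, ∃ n : ℕ, ∀ x ∈ I ^ n, x • a = 0

section PowTorsion

variable {R : Type*} [CommRing R] {I : Ideal R} {A A' : Type*} [AddCommGroup A] [Module R A]
  [AddCommGroup A'] [Module R A']

theorem IsPowTorsion.of_injective (h : IsPowTorsion I A') (f : A →ₗ[R] A')
    (hf : Function.Injective f) : IsPowTorsion I A := fun a =>
  (h (f a)).imp fun _ hn x hx => hf (by rw [map_smul, hn x hx, map_zero])

theorem IsPowTorsion.of_surjective (h : IsPowTorsion I A) (f : A →ₗ[R] A')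
    (hf : Function.Surjective f) : IsPowTorsion I A' := hf.forall.2 fun a =>
  (h a).imp fun _ hn x hx => by rw [← map_smul, hn x hx, map_zero]

theorem IsPowTorsion.submodule (h : IsPowTorsion I A) (N : Submodule R A) : IsPowTorsion I N :=
  h.of_injective N.subtype N.subtype_injective

theorem IsPowTorsion.quotient (h : IsPowTorsion I A) (N : Submodule R A) :
    IsPowTorsion I (A ⧸ N) :=
  h.of_surjective N.mkQ N.mkQ_surjective

theorem IsPowTorsion.support_subset (h : IsPowTorsion I A) :
    Module.support R A ⊆ PrimeSpectrum.zeroLocus (I : Set R) := fun p hp => by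
  obtain ⟨a, ha⟩ := Module.mem_support_iff'.1 hp
  obtain ⟨n, hn⟩ := h a
  exact p.2.le_of_pow_le fun x hx => by_contra fun hxp => ha x hxp (hn x hx)

end PowTorsion

section Localization

variable {R : Type*} [CommRing R] (S : Submonoid R) (R' : Type*) [CommRing R'] [Algebra R R']
  [IsLocalization S R'] {A B : Type*} [AddCommGroup A] [Module R A] [AddCommGroup B] [Module R B]
  [Module R' B] [IsScalarTower R R' B] (f : A →ₗ[R] B) [IsLocalizedModule S f]

theorem exists_fg_le_localized' {F : Submodule R' B} (hF : F.FG) :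
    ∃ N : Submodule R A, N.FG ∧ F ≤ N.localized' R' S f := by
  induction F, hF using Submodule.fg_induction with
  | singleton b =>
    obtain ⟨⟨a, s⟩, rfl⟩ := IsLocalizedModule.mk'_surjective S f b
    refine ⟨R ∙ a, Submodule.fg_span_singleton a, (Submodule.span_singleton_le_iff_mem _ _).2 ?_⟩
    exact ⟨a, Submodule.mem_span_singleton_self a, s, rfl⟩
  | sup F₁ F₂ _ _ h₁ h₂ =>
    obtain ⟨N₁, hN₁, hle₁⟩ := h₁
    obtain ⟨N₂, hN₂, hle₂⟩ := h₂
    exact ⟨N₁ ⊔ N₂, hN₁.sup hN₂, sup_le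
      (hle₁.trans ((Submodule.localized'gi R' S f).gc.monotone_l le_sup_left))
      (hle₂.trans ((Submodule.localized'gi R' S f).gc.monotone_l le_sup_right))⟩

theorem notMem_support_quotient_of_localized'_eq_top {p : PrimeSpectrum R}
    [IsLocalization.AtPrime R' p.asIdeal] [IsLocalizedModule.AtPrime p.asIdeal f]
    {N : Submodule R A} (hN : N.localized' R' p.asIdeal.primeCompl f = ⊤) :
    p ∉ Module.support R (A ⧸ N) := by
  rw [Module.notMem_support_iff]
  have : Subsingleton (B ⧸ N.localized' R' p.asIdeal.primeCompl f) :=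
    Submodule.Quotient.subsingleton_iff.2 hN
  exact (IsLocalizedModule.iso p.asIdeal.primeCompl
    (N.toLocalizedQuotient' R' p.asIdeal.primeCompl f)).subsingleton

theorem exists_smul_eq_zero_of_fg {N : Submodule R A} (hN : N.FG)
    (h : ∀ a ∈ N, ∃ s : S, s • a = 0) : ∃ s : S, ∀ a ∈ N, s • a = 0 := by
  induction N, hN using Submodule.fg_induction with
  | singleton b =>
    obtain ⟨s, hs⟩ := h b (Submodule.mem_span_singleton_self b)
    refine ⟨s, fun a ha => ?_⟩
    obtain ⟨r, rfl⟩ := Submodule.mem_span_singleton.1 ha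
    rw [smul_comm, hs, smul_zero]
  | sup N₁ N₂ _ _ h₁ h₂ =>
    obtain ⟨s₁, hs₁⟩ := h₁ fun a ha => h a (Submodule.mem_sup_left ha)
    obtain ⟨s₂, hs₂⟩ := h₂ fun a ha => h a (Submodule.mem_sup_right ha)
    refine ⟨s₁ * s₂, fun a ha => ?_⟩
    obtain ⟨a₁, ha₁, a₂, ha₂, rfl⟩ := Submodule.mem_sup.1 ha
    rw [smul_add, mul_smul _ _ a₂, hs₂ a₂ ha₂, mul_comm, mul_smul, hs₁ a₁ ha₁, smul_zero,
      smul_zero, add_zero]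

theorem torsionBySet_map_le_localized' {I : Ideal R} (hI : I.FG) :
    Submodule.torsionBySet R' B (I.map (algebraMap R R') : Set R') ≤
      (Submodule.torsionBySet R A (I : Set R)).localized' R' S f := by
  intro b hb
  obtain ⟨⟨a, s⟩, rfl⟩ := IsLocalizedModule.mk'_surjective S f b
  have killed (x : R) (hx : x ∈ I) : ∃ u : S, u • x • a = 0 := by
    have h := (Submodule.mem_torsionBySet_iff _ _).1 hb ⟨_, Ideal.mem_map_of_mem _ hx⟩
    rwa [algebraMap_smul, Function.uncurry_apply_pair, ← IsLocalizedModule.mk'_smul,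
      IsLocalizedModule.mk'_eq_zero'] at h
  have hIa := Submodule.FG.map (LinearMap.toSpanSingleton R A a) hI
  obtain ⟨u, hu⟩ := exists_smul_eq_zero_of_fg S hIa <| by
    rintro _ ⟨x, hx, rfl⟩
    exact killed x hx
  refine ⟨u • a, (Submodule.mem_torsionBySet_iff _ _).2 fun x => ?_, u * s,
    IsLocalizedModule.mk'_cancel_left f a u s⟩
  rw [smul_comm]
  exact hu _ ⟨x, x.2, rfl⟩

end Localization

section MinimalSupport

open Pointwise

variable {R : Type*} [CommRing R] {A : Type*} [AddCommGroup A] [Module R A] {p : PrimeSpectrum R}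

theorem exists_pow_smul_eq_zero_of_minimal_support {B : Type*} [AddCommGroup B] [Module R B]
    (f : A →ₗ[R] B) [IsLocalizedModule.AtPrime p.asIdeal f]
    (hp : ∀ q ∈ Module.support R A, q ≤ p → p ≤ q) {x : R} (hx : x ∈ p.asIdeal) (b : B) :
    ∃ n : ℕ, x ^ n • b = 0 := by
  obtain ⟨⟨a, s⟩, rfl⟩ := IsLocalizedModule.mk'_surjective p.asIdeal.primeCompl f b
  suffices ∃ n : ℕ, ∃ u ∈ p.asIdeal.primeCompl, u * x ^ n ∈ Ideal.torsionOf R A a by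
    refine this.imp fun n ⟨u, hu, h⟩ => ?_
    rw [Function.uncurry_apply_pair, ← IsLocalizedModule.mk'_smul, IsLocalizedModule.mk'_eq_zero']
    exact ⟨⟨u, hu⟩, by rwa [Submonoid.mk_smul, smul_smul]⟩
  by_cases hap : Ideal.torsionOf R A a ≤ p.asIdeal
  · have p_mem : p.asIdeal ∈ (Ideal.torsionOf R A a).minimalPrimes :=
      ⟨⟨p.2, hap⟩, fun q hq hqp => hp ⟨q, hq.1⟩
        (Module.mem_support_iff'.2 ⟨a, fun r hr h => hr (hq.2 h)⟩) hqp⟩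
    have x_mem := Ideal.mem_map_of_mem (algebraMap R (Localization.AtPrime p.asIdeal)) hx
    rw [← IsLocalization.AtPrime.radical_map_of_mem_minimalPrimes _ _ _ p_mem] at x_mem
    refine x_mem.imp fun n hn => ?_
    rwa [← map_pow, IsLocalization.algebraMap_mem_map_algebraMap_iff p.asIdeal.primeCompl] at hn
  · obtain ⟨u, hu, hup⟩ := SetLike.not_le_iff_exists.1 hap
    exact ⟨0, u, hup, by rwa [pow_zero, mul_one]⟩

variable [IsNoetherianRing R] {I : Ideal R}

theorem isArtinian_of_minimal_support {B : Type*} [AddCommGroup B] [Module R B]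
    (R' : Type*) [CommRing R'] [Algebra R R'] [IsLocalization.AtPrime R' p.asIdeal] [Module R' B]
    [IsScalarTower R R' B] (f : A →ₗ[R] B) [IsLocalizedModule.AtPrime p.asIdeal f]
    (hI : (Submodule.torsionBySet R' B (I.map (algebraMap R R') : Set R')).FG)
    (hIp : I ≤ p.asIdeal) (hp : ∀ q ∈ Module.support R A, q ≤ p → p ≤ q) : IsArtinian R' B := by
  classical
  have : IsNoetherianRing R' := IsLocalization.isNoetherianRing p.asIdeal.primeCompl R' ‹_›
  have : IsLocalRing R' := IsLocalization.AtPrime.isLocalRing R' p.asIdeal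
  let m := IsLocalRing.maximalIdeal R'
  have map_eq : p.asIdeal.map (algebraMap R R') = m :=
    IsLocalization.AtPrime.map_eq_maximalIdeal p.asIdeal R'
  have socle_le := Submodule.torsionBySet_le_torsionBySet_of_subset (M := B)
    (SetLike.coe_subset_coe.2 ((Ideal.map_mono hIp).trans_eq map_eq))
  obtain ⟨g, hg⟩ := IsNoetherian.noetherian p.asIdeal
  have span_eq : Ideal.span ((g.image (algebraMap R R') : Finset R') : Set R') = m := by
    rw [Finset.coe_image, ← Ideal.map_span, ← map_eq, ← hg, Ideal.submodule_span_eq]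
  have : Module.Finite R' (Submodule.torsionBySet R' B (m : Set R')) :=
    Module.Finite.iff_fg.2 (hI.of_le socle_le)
  have : IsArtinian R' (Submodule.torsionBySet R' B (g.image (algebraMap R R') : Set R')) := by
    rw [Submodule.torsionBySet_eq_torsionBySet_span, span_eq]
    exact isArtinian_of_isTorsionBySet (Submodule.torsionBySet_isTorsionBySet _)
  refine isArtinian_of_isArtinian_torsionBySet (g.image (algebraMap R R'))
    (Finset.forall_mem_image.2 fun x hx b => ?_)
  simp only [← map_pow, algebraMap_smul]
  exact exists_pow_smul_eq_zero_of_minimal_support f hp (hg.le (Ideal.subset_span hx)) b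

theorem exists_notMem_support_quotient_sup_smul (hA : IsPowTorsion I A)
    (hI : (Submodule.torsionBySet R A (I : Set R)).FG)
    (hp : ∀ q ∈ Module.support R A, q ≤ p → p ≤ q) :
    ∃ Q : Set (Ideal R), Q.Finite ∧ (∀ q ∈ Q, q.IsPrime ∧ ¬ I ≤ q) ∧
      ∃ N : Submodule R A, N.FG ∧ ∀ x, (∀ q ∈ Q, x ∉ q) →
        p ∉ Module.support R (A ⧸ (N ⊔ x • (⊤ : Submodule R A))) := by
  by_cases hIp : I ≤ p.asIdeal
  swap
  · exact ⟨∅, Set.finite_empty, by simp, ⊥, Submodule.fg_bot,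
      fun x _ h => hIp ((hA.quotient _).support_subset h)⟩
  let S := p.asIdeal.primeCompl
  let R' := Localization S
  let f := LocalizedModule.mkLinearMap S A
  have : IsNoetherianRing R' := IsLocalization.isNoetherianRing S R' ‹_›
  have hI' := (Submodule.localized'_fg R' S f hI).of_le
    (torsionBySet_map_le_localized' S R' f (IsNoetherian.noetherian I))
  have := isArtinian_of_minimal_support R' f hI' hIp hp
  obtain ⟨Q, hQ, hIQ, F, hF, hFQ⟩ := exists_fg_sup_smul_top_eq_top hI'
  obtain ⟨N, hN, hFN⟩ := exists_fg_le_localized' S R' f hF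
  refine ⟨Ideal.comap (algebraMap R R') '' Q, hQ.image _, Set.forall_mem_image.2 fun q hq => ?_,
    N, hN, fun x hx => notMem_support_quotient_of_localized'_eq_top R' f (top_unique ?_)⟩
  · have := (hIQ q hq).1
    exact ⟨Ideal.comap_isPrime _ _, fun h => (hIQ q hq).2 (Ideal.map_le_iff_le_comap.2 h)⟩
  · have mono := (Submodule.localized'gi R' S f).gc.monotone_l
    rw [← hFQ (algebraMap R R' x) fun q hq h => hx _ ⟨q, hq, rfl⟩ h]
    refine sup_le (hFN.trans (mono le_sup_left)) (le_trans ?_ (mono le_sup_right))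
    rintro _ ⟨b, -, rfl⟩
    obtain ⟨⟨a, s⟩, rfl⟩ := IsLocalizedModule.mk'_surjective S f b
    refine ⟨x • a, Submodule.smul_mem_pointwise_smul _ _ _ trivial, s, ?_⟩
    simp [IsLocalizedModule.mk'_smul, S, f]

theorem exists_mem_forall_notMem_support_quotient_sup_smul (hA : IsPowTorsion I A)
    (hI : (Submodule.torsionBySet R A (I : Set R)).FG) {T : Set (PrimeSpectrum R)} (hT : T.Finite)
    (hmin : ∀ p ∈ T, ∀ q ∈ Module.support R A, q ≤ p → p ≤ q) :
    ∃ x ∈ I, ∃ N : Submodule R A, N.FG ∧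
      ∀ p ∈ T, p ∉ Module.support R (A ⧸ (N ⊔ x • (⊤ : Submodule R A))) := by
  choose! Q hQ hIQ N hN hNQ using
    fun p hp => exists_notMem_support_quotient_sup_smul hA hI (hmin p hp)
  have hIQ' : ∀ q ∈ ⋃ p ∈ T, Q p, q.IsPrime ∧ ¬ I ≤ q := by
    simpa only [Set.mem_iUnion₂] using fun q ⟨p, hp, hq⟩ => hIQ p hp q hq
  obtain ⟨x, hxI, hxQ⟩ : ∃ x ∈ I, x ∉ ⋃ q ∈ ⋃ p ∈ T, Q p, (q : Set R) :=
    Set.not_subset.1 fun h => by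
      obtain ⟨q, hq, hIq⟩ := (Ideal.subset_union_prime_finite (hT.biUnion hQ) (f := id) 0 0
        fun q hq _ _ => (hIQ' q hq).1).1 h
      exact (hIQ' q hq).2 hIq
  simp only [Set.mem_iUnion₂, not_exists] at hxQ
  refine ⟨x, hxI, ⨆ p ∈ hT.toFinset, N p,
    Submodule.fg_biSup _ _ fun p hp => hN p (hT.mem_toFinset.1 hp), fun p hp hps => ?_⟩
  refine hNQ p hp x (fun q hq => hxQ q ⟨p, hp, hq⟩) (support_quotient_anti ?_ hps)
  exact sup_le_sup_right (le_biSup N (hT.mem_toFinset.2 hp)) _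

end MinimalSupport

section FiniteExt

variable {R : Type*} [CommRing R]

theorem finite_of_ker_le_range_of_range_le [IsNoetherianRing R] {U V W : Type*}
    [AddCommGroup U] [AddCommGroup V] [AddCommGroup W] [Module R U] [Module R V] [Module R W]
    [Module.Finite R U] (f : U →ₗ[R] V) (g : V →ₗ[R] W)
    (hker : LinearMap.ker g ≤ LinearMap.range f)
    {P : Submodule R W} (hP : P.FG) (hrange : LinearMap.range g ≤ P) : Module.Finite R V := by
  have hf : (LinearMap.range f).FG := Module.Finite.iff_fg.1 inferInstance
  refine ⟨Submodule.fg_of_fg_map_of_fg_inf_ker g ?_ (hf.of_le (inf_le_right.trans hker))⟩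
  rw [← LinearMap.range_eq_map]
  exact hP.of_le hrange

variable {C : Type*} [Category C] [Abelian C] [Linear R C] [HasExt C]
  (X : C) {S : ShortComplex C}

theorem ker_postcomp_mk₀_zero (hS : S.ShortExact) :
    LinearMap.ker ((Abelian.Ext.mk₀ S.f).postcompOfLinear R X (add_zero 0)) = ⊥ :=
  have := hS.mono_f
  LinearMap.ker_eq_bot.2 (Abelian.Ext.postcomp_mk₀_injective_of_mono X S.f)

variable [IsNoetherianRing R]

theorem finite_ext_X₂ (hS : S.ShortExact) {j : ℕ} (h₁ : Module.Finite R (Abelian.Ext X S.X₁ j))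
    (h₃ : Module.Finite R (Abelian.Ext X S.X₃ j)) : Module.Finite R (Abelian.Ext X S.X₂ j) :=
  have := h₁
  finite_of_ker_le_range_of_range_le
    ((Abelian.Ext.mk₀ S.f).postcompOfLinear R X (add_zero j))
    ((Abelian.Ext.mk₀ S.g).postcompOfLinear R X (add_zero j))
    (fun v hv => Abelian.Ext.covariant_sequence_exact₂ X hS v hv) h₃.1 le_top

theorem finite_ext_X₃ (hS : S.ShortExact) {j : ℕ} (h₂ : Module.Finite R (Abelian.Ext X S.X₂ j))
    (h₁ : Module.Finite R (Abelian.Ext X S.X₁ (j + 1))) :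
    Module.Finite R (Abelian.Ext X S.X₃ j) :=
  have := h₂
  finite_of_ker_le_range_of_range_le
    ((Abelian.Ext.mk₀ S.g).postcompOfLinear R X (add_zero j))
    (hS.extClass.postcompOfLinear R X rfl)
    (fun v hv => Abelian.Ext.covariant_sequence_exact₃ X hS v rfl hv) h₁.1 le_top

theorem finite_ext_X₁ (hS : S.ShortExact) {j : ℕ} (h₃ : Module.Finite R (Abelian.Ext X S.X₃ j))
    (h₂ : Module.Finite R (Abelian.Ext X S.X₂ (j + 1))) :
    Module.Finite R (Abelian.Ext X S.X₁ (j + 1)) :=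
  have := h₃
  finite_of_ker_le_range_of_range_le
    (hS.extClass.postcompOfLinear R X rfl)
    ((Abelian.Ext.mk₀ S.f).postcompOfLinear R X (add_zero (j + 1)))
    (fun v hv => Abelian.Ext.covariant_sequence_exact₁ X hS v hv rfl) h₂.1 le_top

theorem finite_ext_zero_X₁ (hS : S.ShortExact) (h₂ : Module.Finite R (Abelian.Ext X S.X₂ 0)) :
    Module.Finite R (Abelian.Ext X S.X₁ 0) :=
  have := h₂
  Module.Finite.of_injective _ (LinearMap.ker_eq_bot.1 (ker_postcomp_mk₀_zero X hS))

theorem fg_ker_postcomp_mk₀ (hS : S.ShortExact)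
    (h₃ : ∀ j, Module.Finite R (Abelian.Ext X S.X₃ j)) (j : ℕ) :
    (LinearMap.ker ((Abelian.Ext.mk₀ S.f).postcompOfLinear R X (add_zero j))).FG := by
  cases j with
  | zero =>
    rw [ker_postcomp_mk₀_zero X hS]
    exact Submodule.fg_bot
  | succ j =>
    have := h₃ j
    have hδ : (LinearMap.range (hS.extClass.postcompOfLinear R X (rfl : j + 1 = j + 1))).FG :=
      Module.Finite.iff_fg.1 inferInstance
    exact hδ.of_le fun v hv => Abelian.Ext.covariant_sequence_exact₁ X hS v hv rfl

/- Multiplication by `x` on `Ext X Y` is zero and factors through `Ext X P`, so `Ext X Y` lies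
between quotients of `Ext X K` and the kernel of `Ext X P → Ext X Y`. -/
theorem finite_ext_of_smul_id_eq_zero {X K Y P L : C} {i : K ⟶ Y} {π : Y ⟶ P} {ι : P ⟶ Y}
    {q : Y ⟶ L} {hiπ : i ≫ π = 0} {hιq : ι ≫ q = 0}
    (hK : (ShortComplex.mk i π hiπ).ShortExact) (hL : (ShortComplex.mk ι q hιq).ShortExact)
    {x : R} (hX : x • 𝟙 X = 0) (hY : π ≫ ι = x • 𝟙 Y)
    (hfinK : ∀ j, Module.Finite R (Abelian.Ext X K j))
    (hfinL : ∀ j, Module.Finite R (Abelian.Ext X L j)) (j : ℕ) :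
    Module.Finite R (Abelian.Ext X Y j) := by
  have := hfinK j
  refine finite_of_ker_le_range_of_range_le
    ((Abelian.Ext.mk₀ i).postcompOfLinear R X (add_zero j))
    ((Abelian.Ext.mk₀ π).postcompOfLinear R X (add_zero j))
    (fun v hv => Abelian.Ext.covariant_sequence_exact₂ X hK v hv)
    (fg_ker_postcomp_mk₀ X hL hfinL j) ?_
  rintro _ ⟨v, rfl⟩
  change (v.comp (Abelian.Ext.mk₀ π) (add_zero j)).comp (Abelian.Ext.mk₀ ι) (add_zero j) = 0
  calc (v.comp (Abelian.Ext.mk₀ π) (add_zero j)).comp (Abelian.Ext.mk₀ ι) (add_zero j)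
      = x • v := by
        rw [Abelian.Ext.comp_assoc_of_third_deg_zero, Abelian.Ext.mk₀_comp_mk₀, hY,
          ← Abelian.Ext.smul_eq_comp_mk₀]
    _ = (Abelian.Ext.mk₀ (x • 𝟙 X)).comp v (zero_add j) := by
        rw [Abelian.Ext.mk₀_smul, Abelian.Ext.smul_comp, Abelian.Ext.mk₀_id_comp]
    _ = 0 := by rw [hX, Abelian.Ext.mk₀_zero, Abelian.Ext.zero_comp]

end FiniteExt

section QuotientExt

variable {R : Type u} [CommRing R] (I : Ideal R) {A B : Type u} [AddCommGroup A] [Module R A]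
  [AddCommGroup B] [Module R B]

/-- `Ext^j(R/I, A)` is finitely generated, with `Ext` computed in the derived category; this is
the form of the condition for which long exact sequences are available. -/
abbrev HasFiniteExt (A : Type u) [AddCommGroup A] [Module R A] (j : ℕ) : Prop :=
  Module.Finite R (Abelian.Ext (ModuleCat.of R (R ⧸ I)) (ModuleCat.of R A) j)

theorem smul_id_quotient_eq_zero {x : R} (hx : x ∈ I) :
    x • 𝟙 (ModuleCat.of R (R ⧸ I)) = 0 := by
  ext : 1
  refine Submodule.linearMap_qext _ (LinearMap.ext_ring ?_)
  change x • I.mkQ 1 = 0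
  rw [← map_smul, Submodule.mkQ_apply, Submodule.Quotient.mk_eq_zero, smul_eq_mul, mul_one]
  exact hx

theorem shortExact_subtype_mkQ (N : Submodule R A) :
    (ModuleCat.shortComplexOfCompEqZero N.subtype N.mkQ
      (LinearMap.exact_subtype_mkQ N).linearMap_comp_eq_zero).ShortExact :=
  ModuleCat.shortComplex_shortExact _ (LinearMap.exact_subtype_mkQ N) N.injective_subtype
    N.mkQ_surjective

theorem exact_subtype_ker_rangeRestrict (φ : A →ₗ[R] B) :
    Function.Exact (LinearMap.ker φ).subtype φ.rangeRestrict := by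
  rw [LinearMap.exact_iff, LinearMap.ker_rangeRestrict, Submodule.range_subtype]

theorem shortExact_subtype_ker_rangeRestrict (φ : A →ₗ[R] B) :
    (ModuleCat.shortComplexOfCompEqZero (LinearMap.ker φ).subtype φ.rangeRestrict
      (exact_subtype_ker_rangeRestrict φ).linearMap_comp_eq_zero).ShortExact :=
  ModuleCat.shortComplex_shortExact _ (exact_subtype_ker_rangeRestrict φ)
    (Submodule.injective_subtype _) φ.surjective_rangeRestrict

theorem hasFiniteExt_zero_iff :
    HasFiniteExt I A 0 ↔ Module.Finite R ((R ⧸ I) →ₗ[R] A) :=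
  Module.Finite.equiv_iff (Abelian.Ext.linearEquiv₀.trans ModuleCat.homLinearEquiv)

theorem torsionBySet_eq_range_applyₗ :
    Submodule.torsionBySet R A (I : Set R) =
      LinearMap.range (LinearMap.applyₗ (I.mkQ 1) : ((R ⧸ I) →ₗ[R] A) →ₗ[R] A) := by
  refine le_antisymm (fun a ha => ?_) ?_
  · rw [Submodule.mem_torsionBySet_iff] at ha
    have hIa : I ≤ LinearMap.ker (LinearMap.toSpanSingleton R A a) := fun x hx => ha ⟨x, hx⟩
    exact ⟨I.liftQ _ hIa, (I.liftQ_apply _ (h := hIa) 1).trans (one_smul R a)⟩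
  · rintro _ ⟨ψ, rfl⟩
    rw [Submodule.mem_torsionBySet_iff]
    rintro ⟨x, hx⟩
    change x • ψ (I.mkQ 1) = 0
    have hx1 : x • I.mkQ 1 = 0 := by
      rwa [← map_smul, Submodule.mkQ_apply, Submodule.Quotient.mk_eq_zero, smul_eq_mul, mul_one]
    rw [← map_smul, hx1, map_zero]

variable {I}

theorem HasFiniteExt.fg_torsionBySet [IsNoetherianRing R] (h : HasFiniteExt I A 0) :
    (Submodule.torsionBySet R A (I : Set R)).FG := by
  have := (hasFiniteExt_zero_iff I).1 h
  rw [torsionBySet_eq_range_applyₗ, ← Module.Finite.iff_fg]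
  infer_instance

theorem HasFiniteExt.of_finite [IsNoetherianRing R] [Module.Finite R A] (j : ℕ) :
    HasFiniteExt I A j :=
  inferInstance

theorem hasFiniteExt_quotient_iff [IsNoetherianRing R] {N : Submodule R A} (hN : N.FG) {j : ℕ} :
    HasFiniteExt I (A ⧸ N) j ↔ HasFiniteExt I A j := by
  have : Module.Finite R N := Module.Finite.iff_fg.2 hN
  exact ⟨finite_ext_X₂ _ (shortExact_subtype_mkQ N) (HasFiniteExt.of_finite j),
    fun h => finite_ext_X₃ _ (shortExact_subtype_mkQ N) h (HasFiniteExt.of_finite (j + 1))⟩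

theorem HasFiniteExt.of_ker_lsmul_of_quotient_range_lsmul [IsNoetherianRing R] {x : R}
    (hx : x ∈ I) (hker : ∀ j, HasFiniteExt I (LinearMap.ker (LinearMap.lsmul R A x)) j)
    (hquot : ∀ j, HasFiniteExt I (A ⧸ LinearMap.range (LinearMap.lsmul R A x)) j) (j : ℕ) :
    HasFiniteExt I A j :=
  finite_ext_of_smul_id_eq_zero (shortExact_subtype_ker_rangeRestrict (LinearMap.lsmul R A x))
    (shortExact_subtype_mkQ (LinearMap.range (LinearMap.lsmul R A x)))
    (smul_id_quotient_eq_zero I hx) rfl hker hquot j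

theorem HasFiniteExt.ker_lsmul [IsNoetherianRing R] {k : ℕ} (hk : k ≤ 1)
    (h : ∀ j ≤ k, HasFiniteExt I A j) (x : R) :
    ∀ j ≤ k, HasFiniteExt I (LinearMap.ker (LinearMap.lsmul R A x)) j := by
  have hker := shortExact_subtype_ker_rangeRestrict (LinearMap.lsmul R A x)
  have hrange := shortExact_subtype_mkQ (LinearMap.range (LinearMap.lsmul R A x))
  intro j hj
  obtain rfl | rfl : j = 0 ∨ j = 1 := by omega
  · exact finite_ext_zero_X₁ _ hker (h 0 hj)
  · exact finite_ext_X₁ _ hker (finite_ext_zero_X₁ _ hrange (h 0 (Nat.zero_le _))) (h 1 hj)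

theorem HasFiniteExt.quotient_range_lsmul [IsNoetherianRing R] {k : ℕ} {x : R}
    (h : ∀ j ≤ k, HasFiniteExt I A j)
    (hker : ∀ j, HasFiniteExt I (LinearMap.ker (LinearMap.lsmul R A x)) j) :
    ∀ j < k, HasFiniteExt I (A ⧸ LinearMap.range (LinearMap.lsmul R A x)) j := fun j hj =>
  finite_ext_X₃ _ (shortExact_subtype_mkQ _) (h j hj.le)
    (finite_ext_X₃ _ (shortExact_subtype_ker_rangeRestrict (LinearMap.lsmul R A x))
      (h (j + 1) hj) (hker (j + 2)))

end QuotientExt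

section FinitelyManyPrimes

variable {R : Type*} [CommRing R] [IsNoetherianRing R]

theorem krullDimLE_one_of_finite_primeSpectrum [Finite (PrimeSpectrum R)] :
    Ring.KrullDimLE 1 R := by
  rw [Ring.krullDimLE_iff, ringKrullDim_le_iff_isMaximal_height_le]
  intro m hm
  obtain ⟨y, hym, hy⟩ : ∃ y ∈ m, ∀ p : PrimeSpectrum R, y ∈ p.asIdeal → m ≤ p.asIdeal := by
    by_contra! h
    obtain ⟨p, hp, hmp⟩ := (Ideal.subset_union_prime_finite
      (Set.toFinite {p : PrimeSpectrum R | ¬ m ≤ p.asIdeal}) (f := PrimeSpectrum.asIdeal)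
      ⟨m, hm.isPrime⟩ ⟨m, hm.isPrime⟩ fun p _ _ _ => p.2).1 fun y hy => by
        obtain ⟨p, hyp, hmp⟩ := h y hy
        exact Set.mem_biUnion (s := {p : PrimeSpectrum R | ¬ m ≤ p.asIdeal}) hmp hyp
    exact hp hmp
  have hmin : m ∈ (Ideal.span {y}).minimalPrimes :=
    ⟨⟨hm.isPrime, (Ideal.span_singleton_le_iff_mem _).2 hym⟩, fun p hp _ =>
      hy ⟨p, hp.1⟩ ((Ideal.span_singleton_le_iff_mem _).1 hp.2)⟩
  exact_mod_cast Ideal.height_le_one_of_isPrincipal_of_mem_minimalPrimes _ m hmin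

theorem isMaximal_of_lt_of_finite_zeroLocus {q p : Ideal R} [q.IsPrime] [hp : p.IsPrime]
    (hqp : q < p) (hq : (PrimeSpectrum.zeroLocus (q : Set R)).Finite) : p.IsMaximal := by
  have hker : RingHom.ker (Ideal.Quotient.mk q) ≤ p := Ideal.mk_ker.trans_le hqp.le
  have : Finite (PrimeSpectrum (R ⧸ q)) := by
    have := hq.to_subtype
    refine Finite.of_injective (fun P => (⟨PrimeSpectrum.comap (Ideal.Quotient.mk q) P, ?_⟩ :
      PrimeSpectrum.zeroLocus (q : Set R))) fun P P' h =>
        PrimeSpectrum.comap_injective_of_surjective _ Ideal.Quotient.mk_surjective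
          (congrArg Subtype.val h)
    exact Ideal.mk_ker.symm.trans_le (Ideal.comap_mono bot_le)
  have := Ideal.map_isPrime_of_surjective Ideal.Quotient.mk_surjective hker
  have hmap : (p.map (Ideal.Quotient.mk q)).IsMaximal := by
    refine Ring.krullDimLE_one_iff_of_noZeroDivisors.1 krullDimLE_one_of_finite_primeSpectrum _
      (fun h => ?_) this
    rw [Ideal.map_eq_bot_iff_le_ker, Ideal.mk_ker] at h
    exact h.not_gt hqp
  have := Ideal.comap_isMaximal_of_surjective _ Ideal.Quotient.mk_surjective
    (K := p.map (Ideal.Quotient.mk q))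
  rwa [Ideal.comap_map_of_surjective' _ Ideal.Quotient.mk_surjective, sup_eq_left.2 hker] at this

end FinitelyManyPrimes

section CofinitenessCriterion

open Pointwise

variable {R : Type u} [CommRing R] {I : Ideal R}

theorem annihilator_lt_annihilator_ker_lsmul {A : Type*} [AddCommGroup A] [Module R A] {x : R}
    (hx : x ∉ Module.annihilator R A) :
    Module.annihilator R A <
      Module.annihilator R (LinearMap.ker (LinearMap.lsmul R A x)) := by
  refine lt_of_le_of_ne
    (LinearMap.annihilator_le_of_injective _ (Submodule.injective_subtype _)) fun h => hx ?_
  rw [h, Module.mem_annihilator]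
  exact fun a => Subtype.ext a.2

/-- The criterion in degree `k` for the cofiniteness of `I`-power torsion modules supported in
`W`: finite generation of `Ext^j(R/I, B)` for `j < k` forces it for all `j`. -/
def ExtFiniteCriterion (I : Ideal R) (W : Set (PrimeSpectrum R)) (k : ℕ) : Prop :=
  ∀ (B : Type u) [AddCommGroup B] [Module R B], IsPowTorsion I B → Module.support R B ⊆ W →
    (∀ j < k, HasFiniteExt I B j) → ∀ j, HasFiniteExt I B j

variable [IsNoetherianRing R]

theorem extFiniteCriterion_empty : ExtFiniteCriterion I ∅ 0 := by
  intro B _ _ _ hB _ j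
  have : Subsingleton B := Module.support_eq_empty_iff.1 (Set.subset_empty_iff.1 hB)
  exact HasFiniteExt.of_finite j

theorem ExtFiniteCriterion.hasFiniteExt_of_fg_of_support_subset {W : Set (PrimeSpectrum R)}
    {k : ℕ} (hW : ExtFiniteCriterion I W k) {A : Type u} [AddCommGroup A] [Module R A]
    (hA : IsPowTorsion I A) {N : Submodule R A} (hN : N.FG)
    (hsupp : Module.support R (A ⧸ N) ⊆ W) (hE : ∀ j < k, HasFiniteExt I A j) (j : ℕ) :
    HasFiniteExt I A j :=
  (hasFiniteExt_quotient_iff hN).1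
    (hW _ (hA.quotient N) hsupp (fun j hj => (hasFiniteExt_quotient_iff hN).2 (hE j hj)) j)

theorem ExtFiniteCriterion.hasFiniteExt_of_ker_lsmul {W : Set (PrimeSpectrum R)} {k : ℕ}
    (hW : ExtFiniteCriterion I W k) {A : Type u} [AddCommGroup A] [Module R A]
    (hA : IsPowTorsion I A) {x : R} (hx : x ∈ I) {N : Submodule R A} (hN : N.FG)
    (hsupp : Module.support R (A ⧸ (N ⊔ x • (⊤ : Submodule R A))) ⊆ W)
    (hE : ∀ j ≤ k, HasFiniteExt I A j)
    (hker : ∀ j, HasFiniteExt I (LinearMap.ker (LinearMap.lsmul R A x)) j) (j : ℕ) :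
    HasFiniteExt I A j := by
  let P := LinearMap.range (LinearMap.lsmul R A x)
  have hP : P = x • (⊤ : Submodule R A) := LinearMap.range_eq_map _
  have e : ((A ⧸ P) ⧸ N.map P.mkQ) ≃ₗ[R] A ⧸ (N ⊔ x • (⊤ : Submodule R A)) :=
    (Submodule.quotientQuotientEquivQuotientSup P N).trans
      (Submodule.quotEquivOfEq _ _ (by rw [hP, sup_comm]))
  exact .of_ker_lsmul_of_quotient_range_lsmul hx hker
    (hW.hasFiniteExt_of_fg_of_support_subset (hA.quotient P) (hN.map _)
      (e.support_eq.trans_subset hsupp) (HasFiniteExt.quotient_range_lsmul hE hker)) j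

theorem ExtFiniteCriterion.union {W T : Set (PrimeSpectrum R)} {k : ℕ}
    (hW : ExtFiniteCriterion I W k) (hk : k ≤ 1) (hT : T.Finite)
    (hmin : ∀ p ∈ T, ∀ q ∈ W ∪ T, q ≤ p → p ≤ q) :
    ExtFiniteCriterion I (W ∪ T) (k + 1) := by
  intro A _ _
  induction hc : Module.annihilator R A using WellFoundedGT.induction generalizing A with
  | ind c ih =>
  intro hA hsupp hE
  have hE : ∀ j ≤ k, HasFiniteExt I A j := fun j hj => hE j (Nat.lt_succ_of_le hj)
  obtain ⟨x, hxI, N, hN, hNT⟩ := exists_mem_forall_notMem_support_quotient_sup_smul hA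
    (hE 0 (Nat.zero_le _)).fg_torsionBySet hT fun p hp q hq => hmin p hp q (hsupp hq)
  have hNW : Module.support R (A ⧸ (N ⊔ x • (⊤ : Submodule R A))) ⊆ W := by
    intro p hp
    have hpA := Module.support_subset_of_surjective _ (Submodule.mkQ_surjective _) hp
    exact (hsupp hpA).resolve_right fun hpT => hNT p hpT hp
  by_cases hx : x ∈ Module.annihilator R A
  · have hx_top : x • (⊤ : Submodule R A) = ⊥ := by
      rw [Submodule.eq_bot_iff]
      rintro _ ⟨a, -, rfl⟩
      exact Module.mem_annihilator.1 hx a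
    rw [hx_top, sup_bot_eq] at hNW
    exact hW.hasFiniteExt_of_fg_of_support_subset hA hN hNW fun j hj => hE j hj.le
  · refine hW.hasFiniteExt_of_ker_lsmul hA hxI hN hNW hE ?_
    refine ih _ (hc ▸ annihilator_lt_annihilator_ker_lsmul hx) _ rfl (hA.submodule _) ?_ ?_
    · exact (Module.support_subset_of_injective _ (Submodule.injective_subtype _)).trans hsupp
    · exact fun j hj => HasFiniteExt.ker_lsmul hk hE x j (Nat.le_of_lt_succ hj)

theorem extFiniteCriterion_of_forall_isMaximal {T : Set (PrimeSpectrum R)} (hT : T.Finite)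
    (hmax : ∀ p ∈ T, p.asIdeal.IsMaximal) : ExtFiniteCriterion I T 1 := by
  have h := extFiniteCriterion_empty (I := I).union (Nat.zero_le 1) hT fun p _ q hq hqp =>
    ((hmax q (hq.resolve_left id)).eq_of_le p.2.ne_top hqp).ge
  rwa [Set.empty_union] at h

theorem extFiniteCriterion_of_isUpperSet {S : Set (PrimeSpectrum R)} (hS : S.Finite)
    (hupper : IsUpperSet S) : ExtFiniteCriterion I S 2 := by
  let closed : Set (PrimeSpectrum R) := {p | p.asIdeal.IsMaximal}
  have hclosed : ExtFiniteCriterion I (S ∩ closed) 1 :=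
    extFiniteCriterion_of_forall_isMaximal (hS.inter_of_left _) fun p hp => hp.2
  rw [← Set.inter_union_sdiff S closed]
  refine hclosed.union le_rfl hS.sdiff fun p hp q hq hqp => by_contra fun hpq => hp.2 ?_
  rw [Set.inter_union_sdiff] at hq
  exact isMaximal_of_lt_of_finite_zeroLocus (lt_of_le_not_ge hqp hpq)
    (hS.subset fun r hqr => hupper hqr hq)

theorem IsPowTorsion.hasFiniteExt_of_isWeaklyLaskerian {A : Type u} [AddCommGroup A] [Module R A]
    (hA : IsPowTorsion I A) (hWL : IsWeaklyLaskerian R A) (h₀ : HasFiniteExt I A 0)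
    (h₁ : HasFiniteExt I A 1) (j : ℕ) : HasFiniteExt I A j := by
  obtain ⟨N, hN, hsupp⟩ := hWL.exists_fg_finite_support_quotient
  refine (extFiniteCriterion_of_isUpperSet hsupp
    fun p q hpq hp => Module.mem_support_mono hpq hp).hasFiniteExt_of_fg_of_support_subset
      hA hN subset_rfl (fun j hj => ?_) j
  interval_cases j
  exacts [h₀, h₁]

end CofinitenessCriterion

section ExtMk

universe v₁ u₁

variable {C : Type u₁} [Category.{v₁} C] [Abelian C] [HasExt.{v₁} C] {X Y : C}

theorem extMk_zero_eq_zero_iff (P : ProjectiveResolution X) (f : P.complex.X 0 ⟶ Y)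
    (hf : P.complex.d 1 0 ≫ f = 0) : P.extMk f 1 rfl hf = 0 ↔ f = 0 := by
  refine ⟨fun h => ?_, fun h => by subst h; exact P.extMk_zero 1 rfl⟩
  rw [← P.extEquivCohomologyClass.apply_eq_iff_eq, P.extEquivCohomologyClass_extMk,
    P.extEquivCohomologyClass_zero, CochainComplex.HomComplex.CohomologyClass.mk_eq_zero_iff,
    CochainComplex.HomComplex.Cocycle.toSingleMk_mem_coboundaries_iff _ _ _ _ _ 1 (by simp)] at h
  obtain ⟨g, hg⟩ := h
  have hd : P.cochainComplex.d (-((0 : ℕ) : ℤ)) 1 = 0 :=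
    ((CochainComplex.isStrictlyLE_iff P.cochainComplex 0).1 inferInstance 1
      (by norm_num)).eq_of_tgt _ _
  rw [hd, Limits.zero_comp] at hg
  rw [← cancel_epi (P.cochainComplexXIso (-((0 : ℕ) : ℤ)) 0 rfl).hom, ← hg, Limits.comp_zero]

theorem extMk_eq_zero_iff_exists_prev (P : ProjectiveResolution X) {n m : ℕ}
    (hm : (ComplexShape.up ℕ).prev n = m) (f : P.complex.X n ⟶ Y)
    (hf : P.complex.d (n + 1) n ≫ f = 0) :
    P.extMk f (n + 1) rfl hf = 0 ↔ ∃ g : P.complex.X m ⟶ Y, P.complex.d n m ≫ g = f := by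
  cases n with
  | succ p =>
    obtain rfl : p = m := by simpa using hm
    exact P.extMk_eq_zero_iff f _ rfl hf p rfl
  | zero =>
    rw [extMk_zero_eq_zero_iff, P.complex.shape 0 m (by simp)]
    simp [Limits.zero_comp, eq_comm]

end ExtMk

section LinearYonedaObj

universe v₁ u₁

variable (R : Type*) [CommRing R] {C : Type u₁} [Category.{v₁} C] [Abelian C] [Linear R C]
  {K L : ChainComplex C ℕ} (Y : C) (n : ℕ)

variable (K) in
/-- The inclusion of the `n`-cocycles of `Hom(K, Y)` into the `n`-cochains. -/
noncomputable def cyclesToHom : (K.linearYonedaObj R Y).cycles n →ₗ[R] (K.X n ⟶ Y) :=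
  ((K.linearYonedaObj R Y).iCycles n).hom

theorem cyclesToHom_injective : Function.Injective (cyclesToHom R K Y n) :=
  (ModuleCat.mono_iff_injective ((K.linearYonedaObj R Y).iCycles n)).1 inferInstance

variable {Y n} in
theorem exists_cyclesToHom_eq_iff (f : K.X n ⟶ Y) :
    (∃ u, cyclesToHom R K Y n u = f) ↔ K.d (n + 1) n ≫ f = 0 := by
  have h := ShortComplex.exact_of_f_is_kernel
    (ShortComplex.mk _ _ ((K.linearYonedaObj R Y).iCycles_d n (n + 1)))
    ((K.linearYonedaObj R Y).cyclesIsKernel n (n + 1) (by simp))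
  exact ((ShortComplex.ShortExact.moduleCat_exact_iff_function_exact _).1 h f).symm

theorem d_comp_cyclesToHom (u : (K.linearYonedaObj R Y).cycles n) :
    K.d (n + 1) n ≫ cyclesToHom R K Y n u = 0 :=
  (exists_cyclesToHom_eq_iff R _).1 ⟨u, rfl⟩

theorem cyclesToHom_toCycles (m : ℕ) (g : K.X m ⟶ Y) :
    cyclesToHom R K Y n (((K.linearYonedaObj R Y).toCycles m n).hom g) = K.d n m ≫ g :=
  congrArg (fun z => z.hom g) ((K.linearYonedaObj R Y).toCycles_i m n)

/-- The map `Hom(L, Y) ⟶ Hom(K, Y)` given by precomposition with a chain map `K ⟶ L`. -/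
noncomputable def linearYonedaObjMap (φ : K ⟶ L) :
    L.linearYonedaObj R Y ⟶ K.linearYonedaObj R Y where
  f i := ((linearYoneda R C).obj Y).map (φ.f i).op
  comm' i j _ := ModuleCat.hom_ext (LinearMap.ext fun g => (φ.comm_assoc j i g).symm)

theorem cyclesToHom_cyclesMap (φ : K ⟶ L) (u : (L.linearYonedaObj R Y).cycles n) :
    cyclesToHom R K Y n ((HomologicalComplex.cyclesMap (linearYonedaObjMap R Y φ) n).hom u) =
      φ.f n ≫ cyclesToHom R L Y n u :=
  congrArg (fun z => z.hom u) (HomologicalComplex.cyclesMap_i (linearYonedaObjMap R Y φ) n)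

theorem isoExt_hom_naturality [EnoughProjectives C] {X X' : C}
    {P : ProjectiveResolution X} {P' : ProjectiveResolution X'} {f : X ⟶ X'}
    (φ : ProjectiveResolution.Hom P P' f) :
    ((Ext R C n).map f.op).app Y ≫ (P.isoExt n Y).hom =
      (P'.isoExt n Y).hom ≫ HomologicalComplex.homologyMap (linearYonedaObjMap R Y φ.hom) n := by
  let F := ((linearYoneda R C).obj Y).rightOp
  let K := P.complex.linearYonedaObj R Y
  let K' := P'.complex.linearYonedaObj R Y
  let ψ : K' ⟶ K := linearYonedaObjMap R Y φ.hom
  let a : (K.op.homology n).unop ⟶ ((Ext R C n).obj (Opposite.op X)).obj Y :=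
    (P.isoLeftDerivedObj F n).hom.unop
  let a' : (K'.op.homology n).unop ⟶ ((Ext R C n).obj (Opposite.op X')).obj Y :=
    (P'.isoLeftDerivedObj F n).hom.unop
  let b : K.homology n ⟶ (K.op.homology n).unop := (K.homologyOp n).hom.unop
  let b' : K'.homology n ⟶ (K'.op.homology n).unop := (K'.homologyOp n).hom.unop
  let ψ' : (K'.op.homology n).unop ⟶ (K.op.homology n).unop :=
    (HomologicalComplex.homologyMap ((F.mapHomologicalComplex _).map φ.hom) n).unop
  have ha : a' ≫ ((Ext R C n).map f.op).app Y = ψ' ≫ a :=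
    congrArg Quiver.Hom.unop (ProjectiveResolution.isoLeftDerivedObj_hom_naturality f P P'
      φ.hom (φ.hom_f_zero_comp_π_f_zero.trans (by simp)) F n)
  have hb : b' ≫ ψ' = HomologicalComplex.homologyMap ψ n ≫ b :=
    congrArg Quiver.Hom.unop (HomologicalComplex.homologyOp_hom_naturality ψ n)
  have hnat : (b' ≫ a') ≫ ((Ext R C n).map f.op).app Y =
      HomologicalComplex.homologyMap ψ n ≫ b ≫ a := by
    rw [Category.assoc, ha, ← Category.assoc, hb, Category.assoc]
  rw [← Iso.inv_comp_eq, ← Category.assoc, ← Iso.eq_comp_inv]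
  exact hnat

end LinearYonedaObj

section ModuleCat

variable {R : Type*} [CommRing R] (K : CochainComplex (ModuleCat R) ℕ) (n : ℕ)

theorem homologyπ_eq_zero_iff (u : K.cycles n) :
    (K.homologyπ n).hom u = 0 ↔
      ∃ g, (K.toCycles ((ComplexShape.up ℕ).prev n) n).hom g = u := by
  have h := ShortComplex.exact_of_g_is_cokernel
    (ShortComplex.mk _ _ (K.toCycles_comp_homologyπ ((ComplexShape.up ℕ).prev n) n))
    (K.homologyIsCokernel _ n rfl)
  exact (ShortComplex.ShortExact.moduleCat_exact_iff_function_exact _).1 h u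

theorem homologyπ_surjective :
    Function.Surjective (K.homologyπ n).hom :=
  (ModuleCat.epi_iff_surjective (K.homologyπ n)).1 inferInstance

end ModuleCat

section HomologyIso

universe v₁ u₁

variable (R : Type*) [CommRing R] {C : Type u₁} [Category.{v₁} C] [Abelian C] [Linear R C]
  [HasExt.{v₁} C] {X X' : C} (P : ProjectiveResolution X) (P' : ProjectiveResolution X') (Y : C)
  (n : ℕ)

/-- The map from the `n`-cocycles of `Hom(P, Y)` to `Ext^n(X, Y)`, for a projective resolution
`P` of `X`. -/
noncomputable def cyclesToExt :
    (P.complex.linearYonedaObj R Y).cycles n →ₗ[R] Abelian.Ext X Y n where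
  toFun u := P.extMk (cyclesToHom R P.complex Y n u) (n + 1) rfl (d_comp_cyclesToHom R Y n u)
  map_add' u v := by
    rw [P.add_extMk]
    congr 1
    rw [map_add]
  map_smul' r u := by
    rw [RingHom.id_apply, Abelian.Ext.smul_eq_comp_mk₀, P.extMk_comp_mk₀]
    congr 1
    rw [map_smul, Linear.comp_smul, Category.comp_id]

theorem cyclesToExt_surjective : Function.Surjective (cyclesToExt R P Y n) := by
  intro α
  obtain ⟨f, hf, rfl⟩ := P.extMk_surjective α (n + 1) rfl
  obtain ⟨u, rfl⟩ := (exists_cyclesToHom_eq_iff R f).2 hf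
  exact ⟨u, rfl⟩

theorem cyclesToExt_eq_zero_iff (u : (P.complex.linearYonedaObj R Y).cycles n) :
    cyclesToExt R P Y n u = 0 ↔
      ∃ g, ((P.complex.linearYonedaObj R Y).toCycles
        ((ComplexShape.up ℕ).prev n) n).hom g = u := by
  refine (extMk_eq_zero_iff_exists_prev P rfl (cyclesToHom R P.complex Y n u)
    (d_comp_cyclesToHom R Y n u)).trans (exists_congr fun g => ?_)
  rw [← (cyclesToHom_injective R Y n).eq_iff, cyclesToHom_toCycles]

theorem ker_homologyπ_linearYonedaObj :
    LinearMap.ker ((P.complex.linearYonedaObj R Y).homologyπ n).hom =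
      LinearMap.ker (cyclesToExt R P Y n) :=
  Submodule.ext fun u =>
    (homologyπ_eq_zero_iff _ n u).trans (cyclesToExt_eq_zero_iff R P Y n u).symm

/-- The cohomology of `Hom(P, Y)` is `Ext^n(X, Y)`, for a projective resolution `P` of `X`: both
are the quotient of the cocycles by the coboundaries. -/
noncomputable def homologyLinearYonedaObjEquiv :
    (P.complex.linearYonedaObj R Y).homology n ≃ₗ[R] Abelian.Ext X Y n :=
  (LinearMap.quotKerEquivOfSurjective ((P.complex.linearYonedaObj R Y).homologyπ n).hom
      (homologyπ_surjective _ n)).symm ≪≫ₗ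
    Submodule.quotEquivOfEq _ _ (ker_homologyπ_linearYonedaObj R P Y n) ≪≫ₗ
    LinearMap.quotKerEquivOfSurjective (cyclesToExt R P Y n) (cyclesToExt_surjective R P Y n)

theorem homologyLinearYonedaObjEquiv_homologyπ (u : (P.complex.linearYonedaObj R Y).cycles n) :
    homologyLinearYonedaObjEquiv R P Y n
      (((P.complex.linearYonedaObj R Y).homologyπ n).hom u) = cyclesToExt R P Y n u := by
  have h : (LinearMap.quotKerEquivOfSurjective _ (homologyπ_surjective _ n)).symm
      (((P.complex.linearYonedaObj R Y).homologyπ n).hom u) = Submodule.Quotient.mk u :=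
    (LinearEquiv.symm_apply_eq _).2 rfl
  simp only [homologyLinearYonedaObjEquiv, LinearEquiv.trans_apply, h,
    Submodule.quotEquivOfEq_mk]
  rfl

variable {P P'}

theorem cyclesToExt_cyclesMap {f : X ⟶ X'} (φ : ProjectiveResolution.Hom P P' f)
    (u : (P'.complex.linearYonedaObj R Y).cycles n) :
    cyclesToExt R P Y n ((HomologicalComplex.cyclesMap (linearYonedaObjMap R Y φ.hom) n).hom u) =
      (Abelian.Ext.mk₀ f).comp (cyclesToExt R P' Y n u) (zero_add n) := by
  refine Eq.trans ?_ (ProjectiveResolution.mk₀_comp_extMk (cyclesToHom R P'.complex Y n u)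
    (n + 1) rfl (d_comp_cyclesToHom R Y n u) φ).symm
  change P.extMk (cyclesToHom R P.complex Y n _) (n + 1) rfl (d_comp_cyclesToHom R Y n _) = _
  congr 1
  exact cyclesToHom_cyclesMap R Y n φ.hom u

theorem homologyLinearYonedaObjEquiv_homologyMap {f : X ⟶ X'}
    (φ : ProjectiveResolution.Hom P P' f) (y : (P'.complex.linearYonedaObj R Y).homology n) :
    homologyLinearYonedaObjEquiv R P Y n
        ((HomologicalComplex.homologyMap (linearYonedaObjMap R Y φ.hom) n).hom y) =
      (Abelian.Ext.mk₀ f).comp (homologyLinearYonedaObjEquiv R P' Y n y) (zero_add n) := by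
  obtain ⟨u, rfl⟩ := homologyπ_surjective _ n y
  have hnat := congrArg (fun z => z.hom u)
    (HomologicalComplex.homologyπ_naturality (linearYonedaObjMap R Y φ.hom) n)
  rw [homologyLinearYonedaObjEquiv_homologyπ, ← cyclesToExt_cyclesMap,
    ← homologyLinearYonedaObjEquiv_homologyπ]
  exact congrArg _ hnat

variable [EnoughProjectives C] (P P')

/-- The comparison between the left derived functors of `Hom(-, Y)`, computed on a projective
resolution `P` of `X`, and the morphisms `X ⟶ Y⟦n⟧` in the derived category. -/
noncomputable def extLinearEquiv :
    ((Ext R C n).obj (Opposite.op X)).obj Y ≃ₗ[R] Abelian.Ext X Y n :=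
  (P.isoExt n Y).toLinearEquiv ≪≫ₗ homologyLinearYonedaObjEquiv R P Y n

theorem extLinearEquiv_naturality (f : X ⟶ X')
    (x : ((Ext R C n).obj (Opposite.op X')).obj Y) :
    extLinearEquiv R P Y n ((((Ext R C n).map f.op).app Y).hom x) =
      (Abelian.Ext.mk₀ f).comp (extLinearEquiv R P' Y n x) (zero_add n) := by
  let φ : ProjectiveResolution.Hom P P' f :=
    ⟨ProjectiveResolution.lift f P P',
      (ProjectiveResolution.lift_commutes_zero f P P').trans (by simp)⟩
  refine Eq.trans ?_ (homologyLinearYonedaObjEquiv_homologyMap R Y n φ _)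
  exact congrArg (homologyLinearYonedaObjEquiv R P Y n)
    (congrArg (fun z => z.hom x) (isoExt_hom_naturality R Y n φ))

end HomologyIso

section DirectLimit

variable {R : Type*} [CommRing R] {ι : Type*} [DecidableEq ι] [Preorder ι] {G : ι → Type*}
  [∀ i, AddCommGroup (G i)] [∀ i, Module R (G i)] {f : ∀ i j, i ≤ j → G i →ₗ[R] G j}

/-- The comparison of a colimit of modules over a preorder, in the sense of category theory, with
the unbundled direct limit of an isomorphic system; unlike in `ModuleCat.directLimitIsColimit`,
there is no universe restriction. -/
noncomputable def directLimitEquivOfIsColimit {F : ι ⥤ ModuleCat R} {c : Limits.Cocone F}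
    (hc : Limits.IsColimit c) (e : ∀ i, F.obj i ≃ₗ[R] G i)
    (he : ∀ i j (h : i ≤ j) (x : F.obj i), e j ((F.map (homOfLE h)).hom x) = f i j h (e i x)) :
    c.pt ≃ₗ[R] Module.DirectLimit G f :=
  let limitCocone : Limits.Cocone F :=
    { pt := ModuleCat.of R (Module.DirectLimit G f)
      ι.app i := ModuleCat.ofHom (Module.DirectLimit.of R ι G f i ∘ₗ (e i).toLinearMap)
      ι.naturality i j h := by
        ext x
        exact (congrArg _ (he i j h.le x)).trans Module.DirectLimit.of_f }
  let toLimit : c.pt ⟶ ModuleCat.of R (Module.DirectLimit G f) := hc.desc limitCocone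
  have toLimit_ι (i : ι) (x : F.obj i) :
      toLimit.hom ((c.ι.app i).hom x) = Module.DirectLimit.of R ι G f i (e i x) :=
    congrArg (fun z => z.hom x) (hc.fac limitCocone i)
  let ofLimit : Module.DirectLimit G f →ₗ[R] c.pt :=
    Module.DirectLimit.lift R ι G f (fun i => (c.ι.app i).hom ∘ₗ (e i).symm.toLinearMap)
      fun i j h y => by
        obtain ⟨x, rfl⟩ := (e i).surjective y
        simp only [LinearMap.comp_apply, LinearEquiv.coe_coe, LinearEquiv.symm_apply_apply, ← he]
        exact congrArg (fun z => z.hom x) (c.w (homOfLE h))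
  have ofLimit_of (i : ι) (x : F.obj i) :
      ofLimit (Module.DirectLimit.of R ι G f i (e i x)) = (c.ι.app i).hom x := by
    simp only [ofLimit, Module.DirectLimit.lift_of, LinearMap.comp_apply, LinearEquiv.coe_coe,
      LinearEquiv.symm_apply_apply]
  LinearEquiv.ofLinearMap toLimit.hom ofLimit
    (Module.DirectLimit.hom_ext fun i => LinearMap.ext fun y => by
      obtain ⟨x, rfl⟩ := (e i).surjective y
      simp only [LinearMap.comp_apply, ofLimit_of, toLimit_ι, LinearMap.id_apply])
    (congrArg ModuleCat.Hom.hom (hc.hom_ext (f := toLimit ≫ ModuleCat.ofHom ofLimit) (f' := 𝟙 _)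
      fun i => by
        ext x
        exact (congrArg ofLimit (toLimit_ι i x)).trans (ofLimit_of i x)))

variable [IsDirectedOrder ι]

theorem bijective_directLimit_lift {P : Type*} [AddCommGroup P] [Module R P]
    (g : ∀ i, G i →ₗ[R] P) (hg : ∀ i j h x, g j (f i j h x) = g i x)
    (hinj : ∀ i, Function.Injective (g i)) (hsurj : ∀ p, ∃ i x, g i x = p) :
    Function.Bijective (Module.DirectLimit.lift R ι G f g hg) := by
  refine ⟨Module.DirectLimit.lift_injective g hg hinj, fun p => ?_⟩
  obtain ⟨i, x, rfl⟩ := hsurj p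
  exact ⟨Module.DirectLimit.of R ι G f i x, Module.DirectLimit.lift_of g hg x⟩

variable {G' : ι → Type*} [Nonempty ι] [∀ i, AddCommGroup (G' i)] [∀ i, Module R (G' i)]
  {f' : ∀ i j, i ≤ j → G' i →ₗ[R] G' j} [DirectedSystem G' (f' · · ·)]

theorem bijective_directLimit_map (φ : ∀ i, G i →ₗ[R] G' i)
    (hφ : ∀ i j h, φ j ∘ₗ f i j h = f' i j h ∘ₗ φ i)
    (hinj : ∀ i x, φ i x = 0 → ∃ j h, f i j h x = 0)
    (hsurj : ∀ i y, ∃ j h x, φ j x = f' i j h y) :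
    Function.Bijective (Module.DirectLimit.map φ hφ) := by
  refine ⟨(injective_iff_map_eq_zero _).2 fun z hz => ?_, fun w => ?_⟩
  · obtain ⟨i, x, rfl⟩ := Module.DirectLimit.exists_of z
    rw [Module.DirectLimit.map_apply_of] at hz
    obtain ⟨j, hij, hj⟩ := Module.DirectLimit.of.zero_exact hz
    rw [← LinearMap.comp_apply, ← hφ, LinearMap.comp_apply] at hj
    obtain ⟨k, hjk, hk⟩ := hinj j _ hj
    rw [← Module.DirectLimit.of_f (hij := hij), ← Module.DirectLimit.of_f (hij := hjk), hk,
      map_zero]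
  · obtain ⟨i, y, rfl⟩ := Module.DirectLimit.exists_of w
    obtain ⟨j, hij, x, hx⟩ := hsurj i y
    exact ⟨Module.DirectLimit.of R ι G f j x, by
      rw [Module.DirectLimit.map_apply_of, hx, Module.DirectLimit.of_f]⟩

end DirectLimit

section ExtQuotientPow

variable {R : Type u} [CommRing R] (𝔞 : Ideal R) {M M' : ModuleCat.{u} R} {i j k n m : ℕ}

/-- The projection `R/𝔞^m → R/𝔞^n` for `n ≤ m`, as a morphism of modules. -/
def quotientPowMap (h : n ≤ m) :
    ModuleCat.of R (R ⧸ 𝔞 ^ m) ⟶ ModuleCat.of R (R ⧸ 𝔞 ^ n) :=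
  ModuleCat.ofHom (Submodule.factor (Ideal.pow_le_pow_right h))

theorem quotientPowMap_self : quotientPowMap 𝔞 (le_refl n) = 𝟙 _ :=
  ModuleCat.hom_ext (Submodule.linearMap_qext _ rfl)

theorem quotientPowMap_comp {l : ℕ} (h : n ≤ m) (h' : m ≤ l) :
    quotientPowMap 𝔞 h' ≫ quotientPowMap 𝔞 h = quotientPowMap 𝔞 (h.trans h') :=
  ModuleCat.hom_ext (Submodule.linearMap_qext _ rfl)

variable (M i) in
/-- The transition map `Ext^i(R/𝔞^n, M) → Ext^i(R/𝔞^m, M)` for `n ≤ m`. -/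
noncomputable def extPowMap (n m : ℕ) (h : n ≤ m) :
    Abelian.Ext (ModuleCat.of R (R ⧸ 𝔞 ^ n)) M i →ₗ[R]
      Abelian.Ext (ModuleCat.of R (R ⧸ 𝔞 ^ m)) M i :=
  (Abelian.Ext.mk₀ (quotientPowMap 𝔞 h)).precompOfLinear R M (zero_add i)

theorem extPowMap_apply (h : n ≤ m) (x : Abelian.Ext (ModuleCat.of R (R ⧸ 𝔞 ^ n)) M i) :
    extPowMap 𝔞 M i n m h x = (Abelian.Ext.mk₀ (quotientPowMap 𝔞 h)).comp x (zero_add i) :=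
  rfl

theorem extPowMap_mk₀ (h : n ≤ m) (f : ModuleCat.of R (R ⧸ 𝔞 ^ n) ⟶ M) :
    extPowMap 𝔞 M 0 n m h (Abelian.Ext.mk₀ f) = Abelian.Ext.mk₀ (quotientPowMap 𝔞 h ≫ f) :=
  Abelian.Ext.mk₀_comp_mk₀ _ _

theorem extPowMap_comp (h : n ≤ m) (x : Abelian.Ext (ModuleCat.of R (R ⧸ 𝔞 ^ n)) M i)
    (y : Abelian.Ext M M' j) (hk : i + j = k) :
    extPowMap 𝔞 M' k n m h (x.comp y hk) = (extPowMap 𝔞 M i n m h x).comp y hk :=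
  (Abelian.Ext.comp_assoc _ _ _ (zero_add i) _ (by lia)).symm

instance directedSystem_extPowMap :
    DirectedSystem (fun n => Abelian.Ext (ModuleCat.of R (R ⧸ 𝔞 ^ n)) M i)
      (extPowMap 𝔞 M i · · ·) where
  map_self n x := by
    rw [extPowMap_apply, quotientPowMap_self, Abelian.Ext.mk₀_id_comp]
  map_map n m l h h' x := by
    simp only [extPowMap_apply]
    rw [← Abelian.Ext.comp_assoc _ _ _ (zero_add 0) _ (by lia), Abelian.Ext.mk₀_comp_mk₀,
      quotientPowMap_comp]

variable (M i) in
/-- The direct limit of the modules `Ext^i(R/𝔞^n, M)`, with `Ext` computed in the derived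
category. -/
abbrev ExtPowLimit : Type u :=
  Module.DirectLimit (fun n => Abelian.Ext (ModuleCat.of R (R ⧸ 𝔞 ^ n)) M i) (extPowMap 𝔞 M i)

variable (M i) in
/-- The identification of `H^i_𝔞(M)`, a colimit of functors built from left derived functors of
`Hom(-, M)`, with the direct limit of the `Ext` modules of the derived category. -/
noncomputable def localCohomologyEquiv :
    (localCohomology 𝔞 i).obj M ≃ₗ[R] ExtPowLimit 𝔞 M i :=
  let D := localCohomology.diagram (localCohomology.idealPowersDiagram 𝔞) i
  have : Limits.HasColimit D := localCohomology.hasColimitDiagram.{u, 0} _ _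
  let ev := (evaluation (ModuleCat.{u} R) (ModuleCat.{u} R)).obj M
  directLimitEquivOfIsColimit
    ((Functor.Final.isColimitWhiskerEquiv (opOp ℕ) _).symm
      (Limits.isColimitOfPreserves ev (Limits.colimit.isColimit D)))
    (fun n => extLinearEquiv R (ProjectiveResolution.of (ModuleCat.of R (R ⧸ 𝔞 ^ n))) M i)
    fun _ _ h x => extLinearEquiv_naturality R _ _ M i (quotientPowMap 𝔞 h) x

end ExtQuotientPow

section PowTorsionSubmodule

variable {R : Type*} [CommRing R] (I : Ideal R) (A : Type*) [AddCommGroup A] [Module R A]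

/-- The submodule `Γ_I(A)` of the elements of `A` that are annihilated by a power of `I`. -/
def powTorsion : Submodule R A where
  carrier := {a | ∃ n, ∀ x ∈ I ^ n, x • a = 0}
  add_mem' := by
    rintro a b ⟨n, hn⟩ ⟨m, hm⟩
    refine ⟨max n m, fun x hx => ?_⟩
    rw [smul_add, hn x (Ideal.pow_le_pow_right (le_max_left _ _) hx),
      hm x (Ideal.pow_le_pow_right (le_max_right _ _) hx), add_zero]
  zero_mem' := ⟨0, fun x _ => smul_zero x⟩
  smul_mem' := by
    rintro r a ⟨n, hn⟩
    exact ⟨n, fun x hx => by rw [smul_comm, hn x hx, smul_zero]⟩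

variable {A}

theorem mem_powTorsion_iff {a : A} : a ∈ powTorsion I A ↔ ∃ n, ∀ x ∈ I ^ n, x • a = 0 :=
  Iff.rfl

variable (A) in
theorem isPowTorsion_powTorsion : IsPowTorsion I (powTorsion I A) := fun ⟨_, n, hn⟩ =>
  ⟨n, fun x hx => Subtype.ext (hn x hx)⟩

variable {I} {B : Type*} [AddCommGroup B] [Module R B]

theorem comap_powTorsion_of_injective (f : A →ₗ[R] B) (hf : Function.Injective f) :
    (powTorsion I B).comap f = powTorsion I A := by
  ext a
  simp only [Submodule.mem_comap, mem_powTorsion_iff, ← map_smul, map_eq_zero_iff f hf]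

theorem IsPowTorsion.apply_mem_powTorsion (hA : IsPowTorsion I A) (f : A →ₗ[R] B) (a : A) :
    f a ∈ powTorsion I B :=
  (hA a).imp fun _ hn x hx => by rw [← map_smul, hn x hx, map_zero]

theorem isPowTorsion_quotient_pow (n : ℕ) : IsPowTorsion I (R ⧸ I ^ n) := fun a =>
  ⟨n, fun x hx => by
    obtain ⟨r, rfl⟩ := Submodule.Quotient.mk_surjective _ a
    rw [← Submodule.Quotient.mk_smul, Submodule.Quotient.mk_eq_zero]
    exact Ideal.mul_mem_right _ _ hx⟩

theorem isPowTorsion_quotient : IsPowTorsion I (R ⧸ I) :=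
  (isPowTorsion_quotient_pow 1).of_surjective (Submodule.factor (pow_one I).le)
    (Submodule.factor_surjective _)

theorem IsPowTorsion.exists_pow_smul_eq_zero [Module.Finite R A] (hA : IsPowTorsion I A) :
    ∃ n, ∀ x ∈ I ^ n, ∀ a : A, x • a = 0 := by
  obtain ⟨S, hS⟩ := Module.Finite.fg_top (R := R) (M := A)
  choose N hN using hA
  refine ⟨S.sup N, fun x hx a => ?_⟩
  have hle : Submodule.span R (S : Set A) ≤ LinearMap.ker (LinearMap.lsmul R A x) :=
    Submodule.span_le.2 fun s hs => hN s x (Ideal.pow_le_pow_right (Finset.le_sup hs) hx)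
  exact hle (hS ▸ Submodule.mem_top)

theorem IsPowTorsion.exists_comap_pow_smul_top_le_ker [IsNoetherianRing R] [Module.Finite R B]
    (hA : IsPowTorsion I A) (K : Submodule R B) (g : K →ₗ[R] A) :
    ∃ n, (I ^ n • ⊤ : Submodule R B).comap K.subtype ≤ LinearMap.ker g := by
  obtain ⟨n, hn⟩ := (hA.submodule (LinearMap.range g)).exists_pow_smul_eq_zero
  obtain ⟨k, hk⟩ := I.exists_pow_inf_eq_pow_smul K
  refine ⟨n + k, fun b hb => ?_⟩
  have hbK : (b : B) ∈ (I ^ n • ⊤ : Submodule R K).map K.subtype := by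
    rw [Submodule.map_smul'', Submodule.map_subtype_top]
    have hb' : (b : B) ∈ I ^ (n + k) • ⊤ ⊓ K := ⟨hb, b.2⟩
    rw [hk _ (Nat.le_add_left _ _), Nat.add_sub_cancel] at hb'
    exact Submodule.smul_mono le_rfl inf_le_right hb'
  obtain ⟨c, hc, hcb⟩ := hbK
  obtain rfl : c = b := Subtype.ext hcb
  refine Submodule.smul_le.2 (fun x hx d _ => ?_) hc
  rw [LinearMap.mem_ker, map_smul]
  exact congrArg Subtype.val (hn x hx ⟨g d, d, rfl⟩)

variable (I A) in
theorem powTorsion_quotient_powTorsion [IsNoetherianRing R] :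
    powTorsion I (A ⧸ powTorsion I A) = ⊥ := by
  refine eq_bot_iff.2 fun y ⟨n, hn⟩ => ?_
  obtain ⟨a, rfl⟩ := Submodule.Quotient.mk_surjective _ y
  let N : Submodule R A := Submodule.map (LinearMap.toSpanSingleton R A a) (I ^ n)
  have hN : N ≤ powTorsion I A := by
    rintro _ ⟨x, hx, rfl⟩
    exact (Submodule.Quotient.mk_eq_zero _).1 (hn x hx)
  have : Module.Finite R N := Module.Finite.iff_fg.2 ((IsNoetherian.noetherian _).map _)
  obtain ⟨m, hm⟩ := ((isPowTorsion_powTorsion I A).of_injective (Submodule.inclusion hN)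
    (Submodule.inclusion_injective hN)).exists_pow_smul_eq_zero
  refine (Submodule.Quotient.mk_eq_zero _).2 ⟨m + n, fun x hx => ?_⟩
  rw [pow_add] at hx
  have hle : I ^ m * I ^ n ≤ LinearMap.ker (LinearMap.toSpanSingleton R A a) :=
    Ideal.mul_le.2 fun r hr s hs => (mul_smul r s a).trans
      (congrArg Subtype.val (hm r hr ⟨s • a, s, hs, rfl⟩))
  exact hle hx

theorem IsPowTorsion.linearMap_eq_zero [IsNoetherianRing R] (hB : IsPowTorsion I B)
    (f : B →ₗ[R] A ⧸ powTorsion I A) : f = 0 :=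
  LinearMap.ext fun b => (Submodule.mem_bot R).1 <|
    powTorsion_quotient_powTorsion I A ▸ hB.apply_mem_powTorsion f b

end PowTorsionSubmodule

section Injective

universe v

variable {R : Type*} [CommRing R] [Small.{v} R] {E : Type v} [AddCommGroup E] [Module R E]
  [Module.Injective R E]

theorem exists_comp_eq_of_ker_le {A B : Type*} [AddCommGroup A] [Module R A] [AddCommGroup B]
    [Module R B] (f : A →ₗ[R] B) (g : A →ₗ[R] E) (h : LinearMap.ker f ≤ LinearMap.ker g) :
    ∃ k : B →ₗ[R] E, k ∘ₗ f = g := by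
  obtain ⟨k, hk⟩ := Module.Injective.extension_property R E _ _
    ((LinearMap.ker f).liftQ f le_rfl)
    (LinearMap.ker_eq_bot.1 (Submodule.ker_liftQ_eq_bot _ _ _ le_rfl))
    ((LinearMap.ker f).liftQ g h)
  exact ⟨k, LinearMap.ext fun a => congrArg (fun z => z ((LinearMap.ker f).mkQ a)) hk⟩

variable (E) in
theorem injective_powTorsion [IsNoetherianRing R] (I : Ideal R) :
    Module.Injective R (powTorsion I E) := by
  refine Module.Baer.injective fun K g => ?_
  obtain ⟨n, hn⟩ := (isPowTorsion_powTorsion I E).exists_comap_pow_smul_top_le_ker K g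
  obtain ⟨k, hk⟩ := exists_comp_eq_of_ker_le ((I ^ n).mkQ ∘ₗ K.subtype)
    ((powTorsion I E).subtype ∘ₗ g) fun x hx => by
      have hx' : (x : R) ∈ (I ^ n • ⊤ : Submodule R R) := by
        rw [smul_eq_mul, Ideal.mul_top]
        exact (Submodule.Quotient.mk_eq_zero _).1 hx
      exact congrArg Subtype.val (hn hx')
  refine ⟨k.codRestrict _ ((isPowTorsion_quotient_pow n).apply_mem_powTorsion k) ∘ₗ (I ^ n).mkQ,
    fun x hx => Subtype.ext ?_⟩
  exact congrArg (fun z => z ⟨x, hx⟩) hk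

end Injective

section ExtTorsion

variable {R : Type u} [CommRing R] {𝔞 : Ideal R}

theorem exists_comp_eq_quotientPowMap_comp {A B : ModuleCat.{u} R} (hA : IsPowTorsion 𝔞 A)
    (π : A ⟶ B) [Epi π] {n : ℕ} (f : ModuleCat.of R (R ⧸ 𝔞 ^ n) ⟶ B) :
    ∃ m, ∃ h : n ≤ m, ∃ g : ModuleCat.of R (R ⧸ 𝔞 ^ m) ⟶ A,
      g ≫ π = quotientPowMap 𝔞 h ≫ f := by
  obtain ⟨a, ha⟩ := (ModuleCat.epi_iff_surjective π).1 inferInstance (f.hom ((𝔞 ^ n).mkQ 1))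
  obtain ⟨k, hk⟩ := hA a
  refine ⟨max n k, le_max_left n k, ModuleCat.ofHom ((𝔞 ^ max n k).liftQ
    (LinearMap.toSpanSingleton R A a)
    fun x hx => hk x (Ideal.pow_le_pow_right (le_max_right n k) hx)), ?_⟩
  refine ModuleCat.hom_ext (Submodule.linearMap_qext _ (LinearMap.ext_ring ?_))
  exact (congrArg π.hom (one_smul R a)).trans ha

variable [IsNoetherianRing R]

theorem exists_mono_injective_isPowTorsion {N : ModuleCat.{u} R} (hN : IsPowTorsion 𝔞 N) :
    ∃ (E : ModuleCat.{u} R) (ι : N ⟶ E), Mono ι ∧ Injective E ∧ IsPowTorsion 𝔞 E := by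
  let E := Injective.under N
  have : Module.Injective R E :=
    Module.injective_module_of_injective_object R E (inj := Injective.injective_under N)
  have := injective_powTorsion E 𝔞
  refine ⟨ModuleCat.of R (powTorsion 𝔞 E), ModuleCat.ofHom ((Injective.ι N).hom.codRestrict _
    (hN.apply_mem_powTorsion (Injective.ι N).hom)), ?_,
    Module.injective_object_of_injective_module R _, isPowTorsion_powTorsion 𝔞 E⟩
  rw [ModuleCat.mono_iff_injective]
  exact fun a b hab => (ModuleCat.mono_iff_injective (Injective.ι N)).1 inferInstance
    (congrArg Subtype.val hab)

theorem exists_extPowMap_eq_zero (j : ℕ) {N : ModuleCat.{u} R} (hN : IsPowTorsion 𝔞 N) {n : ℕ}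
    (x : Abelian.Ext (ModuleCat.of R (R ⧸ 𝔞 ^ n)) N (j + 1)) :
    ∃ m, ∃ h : n ≤ m, extPowMap 𝔞 N (j + 1) n m h x = 0 := by
  induction j using Nat.strong_induction_on generalizing N n with | h j ih
  obtain ⟨E, ι, _, _, hE⟩ := exists_mono_injective_isPowTorsion hN
  let S := ShortComplex.mk ι (Limits.cokernel.π ι) (Limits.cokernel.condition ι)
  have hS : S.ShortExact :=
    { exact := S.exact_of_g_is_cokernel (Limits.cokernelIsCokernel ι), mono_f := ‹_›,
      epi_g := inferInstanceAs (Epi (Limits.cokernel.π ι)) }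
  have hQ : IsPowTorsion 𝔞 S.X₃ :=
    hE.of_surjective S.g.hom ((ModuleCat.epi_iff_surjective S.g).1 hS.epi_g)
  obtain ⟨y, rfl⟩ := Abelian.Ext.covariant_sequence_exact₁ _ hS x
    (Abelian.Ext.eq_zero_of_injective _) rfl
  obtain ⟨m, h, z, hz⟩ : ∃ m, ∃ h : n ≤ m, ∃ z : Abelian.Ext _ S.X₂ j,
      z.comp (Abelian.Ext.mk₀ S.g) (add_zero j) = extPowMap 𝔞 S.X₃ j n m h y := by
    cases j with
    | zero =>
      obtain ⟨f, rfl⟩ := Abelian.Ext.homEquiv₀.symm.surjective y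
      obtain ⟨m, h, g, hg⟩ := exists_comp_eq_quotientPowMap_comp hE S.g f
      exact ⟨m, h, Abelian.Ext.mk₀ g, by
        rw [Abelian.Ext.mk₀_comp_mk₀, hg]; exact (extPowMap_mk₀ 𝔞 h f).symm⟩
    | succ j =>
      obtain ⟨m, h, hm⟩ := ih j (Nat.lt_succ_self j) hQ y
      exact ⟨m, h, 0, by rw [hm, Abelian.Ext.zero_comp]⟩
  refine ⟨m, h, (extPowMap_comp 𝔞 h y hS.extClass rfl).trans ?_⟩
  rw [← hz, Abelian.Ext.comp_assoc _ _ _ _ (zero_add 1) (by lia), hS.comp_extClass,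
    Abelian.Ext.comp_zero]

theorem subsingleton_ext_quotient_powTorsion (E : Type u) [AddCommGroup E] [Module R E]
    [Module.Injective R E] {X : ModuleCat.{u} R} (hX : IsPowTorsion 𝔞 X) (i : ℕ) :
    Subsingleton (Abelian.Ext X (ModuleCat.of R (E ⧸ powTorsion 𝔞 E)) i) := by
  refine subsingleton_of_forall_eq 0 fun x => ?_
  cases i with
  | zero =>
    obtain ⟨f, rfl⟩ := Abelian.Ext.homEquiv₀.symm.surjective x
    have hf : f = 0 := ModuleCat.hom_ext (hX.linearMap_eq_zero f.hom)
    rw [hf]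
    exact Abelian.Ext.mk₀_zero _ _
  | succ i =>
    have := injective_powTorsion E 𝔞
    have : Injective (ModuleCat.of R E) := Module.injective_object_of_injective_module R E
    have : Injective (ModuleCat.of R (powTorsion 𝔞 E)) :=
      Module.injective_object_of_injective_module R _
    have hS := shortExact_subtype_mkQ (powTorsion 𝔞 E)
    obtain ⟨y, rfl⟩ := Abelian.Ext.covariant_sequence_exact₃ X hS x rfl
      (Abelian.Ext.eq_zero_of_injective _)
    rw [Abelian.Ext.eq_zero_of_injective y, Abelian.Ext.zero_comp]

variable (𝔞) in
theorem exists_ker_eq_powTorsion_subsingleton_ext (M : ModuleCat.{u} R) :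
    ∃ (J : ModuleCat.{u} R) (φ : M ⟶ J), LinearMap.ker φ.hom = powTorsion 𝔞 M ∧
      ∀ X : ModuleCat.{u} R, IsPowTorsion 𝔞 X → ∀ i, Subsingleton (Abelian.Ext X J i) := by
  let E := Injective.under M
  have : Module.Injective R E :=
    Module.injective_module_of_injective_object R E (inj := Injective.injective_under M)
  refine ⟨ModuleCat.of R (E ⧸ powTorsion 𝔞 E),
    ModuleCat.ofHom ((powTorsion 𝔞 E).mkQ ∘ₗ (Injective.ι M).hom), ?_,
    fun X hX i => subsingleton_ext_quotient_powTorsion E hX i⟩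
  rw [ModuleCat.hom_ofHom, LinearMap.ker_comp, Submodule.ker_mkQ,
    comap_powTorsion_of_injective _
      ((ModuleCat.mono_iff_injective (Injective.ι M)).1 inferInstance)]

end ExtTorsion

section LocalCohomology

variable {R : Type u} [CommRing R] {𝔞 : Ideal R}

variable (𝔞) in
theorem isPowTorsion_localCohomology (M : ModuleCat.{u} R) (i : ℕ) :
    IsPowTorsion 𝔞 ((localCohomology 𝔞 i).obj M) := by
  refine IsPowTorsion.of_injective (fun z => ?_ : IsPowTorsion 𝔞 (ExtPowLimit 𝔞 M i))
    (localCohomologyEquiv 𝔞 M i).toLinearMap (localCohomologyEquiv 𝔞 M i).injective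
  obtain ⟨n, x, rfl⟩ := Module.DirectLimit.exists_of z
  refine ⟨n, fun r hr => ?_⟩
  have hrx : r • x = 0 := by
    rw [← Abelian.Ext.mk₀_id_comp x, ← Abelian.Ext.smul_comp, ← Abelian.Ext.mk₀_smul,
      smul_id_quotient_eq_zero _ hr, Abelian.Ext.mk₀_zero, Abelian.Ext.zero_comp]
  rw [← map_smul, hrx, map_zero]

variable (𝔞) in
/-- Evaluation at `1`, from `Ext^0(R/𝔞^n, M) = Hom(R/𝔞^n, M)` to the `𝔞`-power torsion of `M`. -/
noncomputable def extZeroEval (M : ModuleCat.{u} R) (n : ℕ) :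
    Abelian.Ext (ModuleCat.of R (R ⧸ 𝔞 ^ n)) M 0 →ₗ[R] powTorsion 𝔞 M :=
  (LinearMap.applyₗ ((𝔞 ^ n).mkQ 1) ∘ₗ
    (Abelian.Ext.linearEquiv₀.trans ModuleCat.homLinearEquiv).toLinearMap).codRestrict _
    fun _ => (isPowTorsion_quotient_pow n).apply_mem_powTorsion _ _

theorem coe_extZeroEval_mk₀ {M : ModuleCat.{u} R} {n : ℕ}
    (f : ModuleCat.of R (R ⧸ 𝔞 ^ n) ⟶ M) :
    (extZeroEval 𝔞 M n (Abelian.Ext.mk₀ f) : M) = f.hom ((𝔞 ^ n).mkQ 1) :=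
  congrArg (fun g : ModuleCat.of R (R ⧸ 𝔞 ^ n) ⟶ M => g.hom ((𝔞 ^ n).mkQ 1))
    (Abelian.Ext.homEquiv₀.apply_symm_apply f)

theorem extZeroEval_extPowMap (M : ModuleCat.{u} R) {n m : ℕ} (h : n ≤ m)
    (x : Abelian.Ext (ModuleCat.of R (R ⧸ 𝔞 ^ n)) M 0) :
    extZeroEval 𝔞 M m (extPowMap 𝔞 M 0 n m h x) = extZeroEval 𝔞 M n x := by
  obtain ⟨f, rfl⟩ := Abelian.Ext.homEquiv₀.symm.surjective x
  refine Subtype.ext ?_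
  exact (congrArg (fun y => (extZeroEval 𝔞 M m y : M)) (extPowMap_mk₀ 𝔞 h f)).trans
    ((coe_extZeroEval_mk₀ _).trans (coe_extZeroEval_mk₀ f).symm)

theorem injective_extZeroEval (M : ModuleCat.{u} R) (n : ℕ) :
    Function.Injective (extZeroEval 𝔞 M n) := by
  refine (injective_iff_map_eq_zero _).2 fun x hx => ?_
  obtain ⟨f, rfl⟩ := Abelian.Ext.homEquiv₀.symm.surjective x
  have hf : f = 0 := ModuleCat.hom_ext <| Submodule.linearMap_qext _ <| LinearMap.ext_ring <|
    (coe_extZeroEval_mk₀ f).symm.trans (congrArg Subtype.val hx)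
  rw [hf]
  exact Abelian.Ext.mk₀_zero _ _

theorem exists_extZeroEval_eq {M : ModuleCat.{u} R} (a : powTorsion 𝔞 M) :
    ∃ n x, extZeroEval 𝔞 M n x = a := by
  obtain ⟨a, n, hn⟩ := a
  refine ⟨n, Abelian.Ext.mk₀ (ModuleCat.ofHom
    ((𝔞 ^ n).liftQ (LinearMap.toSpanSingleton R M a) hn)), Subtype.ext ?_⟩
  exact (coe_extZeroEval_mk₀ _).trans (one_smul R a)

variable (𝔞) in
theorem bijective_lift_extZeroEval (M : ModuleCat.{u} R) :
    Function.Bijective (Module.DirectLimit.lift R ℕ _ (extPowMap 𝔞 M 0) (extZeroEval 𝔞 M)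
      fun _ _ h x => extZeroEval_extPowMap M h x) :=
  bijective_directLimit_lift _ _ (injective_extZeroEval M) exists_extZeroEval_eq

variable (𝔞) in
/-- The identification of `H^0_𝔞(M)` with the `𝔞`-power torsion submodule of `M`. -/
noncomputable def localCohomologyZeroEquiv (M : ModuleCat.{u} R) :
    (localCohomology 𝔞 0).obj M ≃ₗ[R] powTorsion 𝔞 M :=
  (localCohomologyEquiv 𝔞 M 0).trans (LinearEquiv.ofBijective _ (bijective_lift_extZeroEval 𝔞 M))

variable (𝔞) in
/-- The map on the direct limits of the `Ext^i(R/𝔞^n, -)` given by composition with a class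
in `Ext^j(M, M')`. -/
noncomputable def extPowLimitPostcomp {M M' : ModuleCat.{u} R} {i j k : ℕ}
    (y : Abelian.Ext M M' j) (hk : i + j = k) : ExtPowLimit 𝔞 M i →ₗ[R] ExtPowLimit 𝔞 M' k :=
  Module.DirectLimit.map (fun _ => y.postcompOfLinear R _ hk)
    fun _ _ h => LinearMap.ext fun x => (extPowMap_comp 𝔞 h x y hk).symm

theorem bijective_extPowLimitPostcomp {M M' : ModuleCat.{u} R} {i j k : ℕ}
    {y : Abelian.Ext M M' j} {hk : i + j = k}
    (hinj : ∀ n (x : Abelian.Ext (ModuleCat.of R (R ⧸ 𝔞 ^ n)) M i), x.comp y hk = 0 →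
      ∃ m h, extPowMap 𝔞 M i n m h x = 0)
    (hsurj : ∀ n (z : Abelian.Ext (ModuleCat.of R (R ⧸ 𝔞 ^ n)) M' k),
      ∃ m h, ∃ x : Abelian.Ext (ModuleCat.of R (R ⧸ 𝔞 ^ m)) M i,
        x.comp y hk = extPowMap 𝔞 M' k n m h z) :
    Function.Bijective (extPowLimitPostcomp 𝔞 y hk) :=
  bijective_directLimit_map _ _ hinj hsurj

variable {S : ShortComplex (ModuleCat.{u} R)}

theorem bijective_extPowLimitPostcomp_mk₀ [IsNoetherianRing R] (hS : S.ShortExact)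
    (h₁ : IsPowTorsion 𝔞 S.X₁) (i : ℕ) :
    Function.Bijective
      (extPowLimitPostcomp 𝔞 (Abelian.Ext.mk₀ S.g) (add_zero (i + 1))) := by
  refine bijective_extPowLimitPostcomp (fun n x hx => ?_) fun n z => ?_
  · obtain ⟨y, rfl⟩ := Abelian.Ext.covariant_sequence_exact₂ _ hS x hx
    obtain ⟨m, h, hm⟩ := exists_extPowMap_eq_zero i h₁ y
    refine ⟨m, h, ?_⟩
    rw [extPowMap_comp, hm, Abelian.Ext.zero_comp]
  · obtain ⟨m, h, hm⟩ := exists_extPowMap_eq_zero (i + 1) h₁ (z.comp hS.extClass rfl)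
    rw [extPowMap_comp] at hm
    exact ⟨m, h, Abelian.Ext.covariant_sequence_exact₃ _ hS _ rfl hm⟩

theorem bijective_extPowLimitPostcomp_extClass (hS : S.ShortExact)
    (h₂ : ∀ n j, Subsingleton (Abelian.Ext (ModuleCat.of R (R ⧸ 𝔞 ^ n)) S.X₂ j)) (i : ℕ) :
    Function.Bijective (extPowLimitPostcomp 𝔞 hS.extClass (Eq.refl (i + 1))) := by
  refine bijective_extPowLimitPostcomp (fun n x hx => ?_) fun n z => ?_
  · obtain ⟨y, rfl⟩ := Abelian.Ext.covariant_sequence_exact₃ _ hS x rfl hx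
    refine ⟨n, le_rfl, ?_⟩
    rw [(h₂ n i).elim y 0, Abelian.Ext.zero_comp, map_zero]
  · exact ⟨n, le_rfl, Abelian.Ext.covariant_sequence_exact₁ _ hS
      (extPowMap 𝔞 S.X₁ (i + 1) n n le_rfl z) ((h₂ n (i + 1)).elim _ _) rfl⟩

/-- A short exact sequence with `𝔞`-power torsion kernel identifies the local cohomology modules
of positive degree of its other two terms. -/
noncomputable def localCohomologySuccEquivOfIsPowTorsion [IsNoetherianRing R]
    (hS : S.ShortExact) (h₁ : IsPowTorsion 𝔞 S.X₁) (i : ℕ) :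
    (localCohomology 𝔞 (i + 1)).obj S.X₂ ≃ₗ[R] (localCohomology 𝔞 (i + 1)).obj S.X₃ :=
  (localCohomologyEquiv 𝔞 S.X₂ (i + 1)).trans <|
    (LinearEquiv.ofBijective _ (bijective_extPowLimitPostcomp_mk₀ hS h₁ i)).trans
      (localCohomologyEquiv 𝔞 S.X₃ (i + 1)).symm

/-- The connecting isomorphism of a short exact sequence whose middle term has no `Ext` from the
modules `R/𝔞^n`. -/
noncomputable def localCohomologyEquivSuccOfSubsingletonExt (hS : S.ShortExact)
    (h₂ : ∀ n j, Subsingleton (Abelian.Ext (ModuleCat.of R (R ⧸ 𝔞 ^ n)) S.X₂ j)) (i : ℕ) :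
    (localCohomology 𝔞 i).obj S.X₃ ≃ₗ[R] (localCohomology 𝔞 (i + 1)).obj S.X₁ :=
  (localCohomologyEquiv 𝔞 S.X₃ i).trans <|
    (LinearEquiv.ofBijective _ (bijective_extPowLimitPostcomp_extClass hS h₂ i)).trans
      (localCohomologyEquiv 𝔞 S.X₁ (i + 1)).symm

end LocalCohomology

section Cofiniteness

variable {R : Type u} [CommRing R] {𝔞 : Ideal R} {A B : Type u} [AddCommGroup A] [Module R A]
  [AddCommGroup B] [Module R B]

theorem HasFiniteExt.of_linearEquiv {j : ℕ} (h : HasFiniteExt 𝔞 A j) (e : A ≃ₗ[R] B) :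
    HasFiniteExt 𝔞 B j := by
  refine Module.Finite.of_surjective ((Abelian.Ext.mk₀ e.toModuleIso.hom).postcompOfLinear R
    (ModuleCat.of R (R ⧸ 𝔞)) (add_zero j)) fun y =>
      ⟨y.comp (Abelian.Ext.mk₀ e.toModuleIso.inv) (add_zero j), ?_⟩
  refine (Abelian.Ext.comp_assoc y _ _ (add_zero j) (add_zero 0) (add_zero j)).trans ?_
  rw [Abelian.Ext.mk₀_comp_mk₀, Iso.inv_hom_id, Abelian.Ext.comp_mk₀_id]

theorem IsPowTorsion.finite_associatedPrimes [IsNoetherianRing R] (hA : IsPowTorsion 𝔞 A)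
    (h : HasFiniteExt 𝔞 A 0) : (associatedPrimes R A).Finite := by
  have : Module.Finite R (Submodule.torsionBySet R A (𝔞 : Set R)) :=
    Module.Finite.iff_fg.2 h.fg_torsionBySet
  refine (associatedPrimes.finite R (Submodule.torsionBySet R A (𝔞 : Set R))).subset fun p hp => ?_
  obtain ⟨hprime, a, ha⟩ := isAssociatedPrime_iff.1 hp
  have mem_p {x : R} : x ∈ p ↔ x • a = 0 := by
    rw [ha, Submodule.mem_colon_singleton, Submodule.mem_bot]
  obtain ⟨n, hn⟩ := hA a
  have h𝔞p : 𝔞 ≤ p := hprime.le_of_pow_le (n := n) fun x hx => mem_p.2 (hn x hx)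
  refine isAssociatedPrime_iff.2 ⟨hprime, ⟨a, ?_⟩, ?_⟩
  · exact (Submodule.mem_torsionBySet_iff _ _).2 fun x => mem_p.1 (h𝔞p x.2)
  · ext x
    rw [mem_p, Submodule.mem_colon_singleton, Submodule.mem_bot, Subtype.ext_iff]
    rfl

theorem hasFiniteExt_iff_extModule (M : ModuleCat.{u} R) (j : ℕ) :
    HasFiniteExt 𝔞 M j ↔ Module.Finite R (extModule R j (ModuleCat.of R (R ⧸ 𝔞)) M) :=
  (Module.Finite.equiv_iff (extLinearEquiv R (ProjectiveResolution.of _) M j)).symm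

variable [IsNoetherianRing R] {M J : ModuleCat.{u} R}

/-- Dimension shifting for local cohomology along a map `φ : M → J` with torsion kernel, where `J`
has no `Ext` from torsion modules. -/
noncomputable def localCohomologyQuotientRangeEquiv (φ : M ⟶ J)
    (hker : IsPowTorsion 𝔞 (LinearMap.ker φ.hom))
    (hJ : ∀ n j, Subsingleton (Abelian.Ext (ModuleCat.of R (R ⧸ 𝔞 ^ n)) J j)) (i : ℕ) :
    (localCohomology 𝔞 i).obj (ModuleCat.of R (J ⧸ LinearMap.range φ.hom)) ≃ₗ[R]
      (localCohomology 𝔞 (i + 1)).obj M :=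
  (localCohomologyEquivSuccOfSubsingletonExt (shortExact_subtype_mkQ (LinearMap.range φ.hom)) hJ
    i).trans (localCohomologySuccEquivOfIsPowTorsion
      (shortExact_subtype_ker_rangeRestrict φ.hom) hker i).symm

theorem HasFiniteExt.powTorsion {j : ℕ} (hj : j ≤ 1) (hM : ∀ k ≤ j, HasFiniteExt 𝔞 M k) :
    HasFiniteExt 𝔞 (powTorsion 𝔞 M) j := by
  obtain ⟨J, φ, hφ, hJ⟩ := exists_ker_eq_powTorsion_subsingleton_ext 𝔞 M
  have := hJ (ModuleCat.of R (R ⧸ 𝔞)) isPowTorsion_quotient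
  have hker := shortExact_subtype_ker_rangeRestrict φ.hom
  have hrange := shortExact_subtype_mkQ (LinearMap.range φ.hom)
  rw [← hφ]
  obtain rfl | rfl : j = 0 ∨ j = 1 := by omega
  · exact finite_ext_zero_X₁ _ hker (hM 0 le_rfl)
  · have hJ₀ : HasFiniteExt 𝔞 J 0 := inferInstance
    exact finite_ext_X₁ _ hker (finite_ext_zero_X₁ _ hrange hJ₀) (hM 1 le_rfl)

theorem exists_localCohomology_shift (M : ModuleCat.{u} R) :
    ∃ L : ModuleCat.{u} R,
      (∀ i, Nonempty ((localCohomology 𝔞 i).obj L ≃ₗ[R] (localCohomology 𝔞 (i + 1)).obj M)) ∧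
      ∀ j, HasFiniteExt 𝔞 M (j + 1) → HasFiniteExt 𝔞 (powTorsion 𝔞 M) (j + 2) →
        HasFiniteExt 𝔞 L j := by
  obtain ⟨J, φ, hφ, hJ⟩ := exists_ker_eq_powTorsion_subsingleton_ext 𝔞 M
  have := hJ (ModuleCat.of R (R ⧸ 𝔞)) isPowTorsion_quotient
  refine ⟨ModuleCat.of R (J ⧸ LinearMap.range φ.hom), fun i =>
    ⟨localCohomologyQuotientRangeEquiv φ (hφ ▸ isPowTorsion_powTorsion 𝔞 M)
      (fun n => hJ _ (isPowTorsion_quotient_pow n)) i⟩, fun j hM hΓ => ?_⟩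
  have hJj : HasFiniteExt 𝔞 J j := inferInstance
  rw [← hφ] at hΓ
  exact finite_ext_X₃ _ (shortExact_subtype_mkQ (LinearMap.range φ.hom)) hJj
    (finite_ext_X₃ _ (shortExact_subtype_ker_rangeRestrict φ.hom) hM hΓ)

theorem hasFiniteExt_localCohomology_of_lt (t : ℕ) : ∀ M : ModuleCat.{u} R,
    (∀ j ≤ t + 1, HasFiniteExt 𝔞 M j) →
    (∀ i < t, ∀ j, HasFiniteExt 𝔞 ((localCohomology 𝔞 i).obj M) j) →
    ∀ j ≤ 1, HasFiniteExt 𝔞 ((localCohomology 𝔞 t).obj M) j := by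
  induction t with
  | zero =>
    intro M hM _ j hj
    exact (HasFiniteExt.powTorsion hj fun k hk => hM k (by omega)).of_linearEquiv
      (localCohomologyZeroEquiv 𝔞 M).symm
  | succ t ih =>
    intro M hM hH j hj
    obtain ⟨L, e, hL⟩ := exists_localCohomology_shift (𝔞 := 𝔞) M
    have hΓ (j : ℕ) : HasFiniteExt 𝔞 (powTorsion 𝔞 M) j :=
      (hH 0 (Nat.succ_pos t) j).of_linearEquiv (localCohomologyZeroEquiv 𝔞 M)
    refine (ih L (fun j hj => hL j (hM _ (by omega)) (hΓ _)) (fun i hi j => ?_) j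
      hj).of_linearEquiv (e t).some
    exact (hH (i + 1) (by omega) j).of_linearEquiv (e i).some.symm

theorem hasFiniteExt_localCohomology_of_isWeaklyLaskerian {t : ℕ}
    (hM : ∀ j ≤ t + 1, HasFiniteExt 𝔞 M j)
    (hH : ∀ i ≤ t, IsWeaklyLaskerian R ((localCohomology 𝔞 i).obj M)) (j : ℕ) :
    HasFiniteExt 𝔞 ((localCohomology 𝔞 t).obj M) j := by
  induction t using Nat.strong_induction_on generalizing j with | h t ih
  have h := hasFiniteExt_localCohomology_of_lt t M hM fun i hi =>
    ih i hi (fun j hj => hM j (by omega)) fun k hk => hH k (hk.trans hi.le)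
  exact (isPowTorsion_localCohomology 𝔞 M t).hasFiniteExt_of_isWeaklyLaskerian (hH t le_rfl)
    (h 0 (Nat.zero_le 1)) (h 1 le_rfl) j

end Cofiniteness

theorem stmt10_general {R : Type u} [CommRing R] [IsNoetherianRing R] (𝔞 : Ideal R)
    (M : ModuleCat.{u} R) (t : ℕ)
    (hM : ∀ j ≤ t + 2, Module.Finite R (extModule R j (ModuleCat.of R (R ⧸ 𝔞)) M))
    (h : ∀ i ≤ t, IsWeaklyLaskerian R ((localCohomology 𝔞 i).obj M)) :
    (∀ i ≤ t, IsCofinite R 𝔞 ((localCohomology 𝔞 i).obj M)) ∧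
      Module.Finite R ((R ⧸ 𝔞) →ₗ[R] ((localCohomology 𝔞 (t + 1)).obj M)) ∧
      Module.Finite R
        (extModule R 1 (ModuleCat.of R (R ⧸ 𝔞)) ((localCohomology 𝔞 (t + 1)).obj M)) ∧
      (associatedPrimes R ((localCohomology 𝔞 (t + 1)).obj M)).Finite := by
  have hM' : ∀ j ≤ t + 2, HasFiniteExt 𝔞 M j := fun j hj =>
    (hasFiniteExt_iff_extModule M j).2 (hM j hj)
  have hfin : ∀ i ≤ t, ∀ j, HasFiniteExt 𝔞 ((localCohomology 𝔞 i).obj M) j := fun i hi =>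
    hasFiniteExt_localCohomology_of_isWeaklyLaskerian (fun j hj => hM' j (by omega))
      fun k hk => h k (hk.trans hi)
  have htop : ∀ j ≤ 1, HasFiniteExt 𝔞 ((localCohomology 𝔞 (t + 1)).obj M) j :=
    hasFiniteExt_localCohomology_of_lt (t + 1) M hM' fun i hi => hfin i (Nat.lt_succ_iff.1 hi)
  exact ⟨fun i hi => ⟨(isPowTorsion_localCohomology 𝔞 M i).support_subset, fun j =>
      (hasFiniteExt_iff_extModule _ j).1 (hfin i hi j)⟩,
    (hasFiniteExt_zero_iff 𝔞).1 (htop 0 (Nat.zero_le 1)),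
    (hasFiniteExt_iff_extModule _ 1).1 (htop 1 le_rfl),
    (isPowTorsion_localCohomology 𝔞 M (t + 1)).finite_associatedPrimes (htop 0 (Nat.zero_le 1))⟩

theorem stmt10 [IsNoetherianRing R] (𝔞 : Ideal R) (M : ModuleCat.{u} R) [Module.Finite R M]
    (t : ℕ) (h : ∀ i ≤ t, IsWeaklyLaskerian R ((localCohomology 𝔞 i).obj M)) :
    (∀ i ≤ t, IsCofinite R 𝔞 ((localCohomology 𝔞 i).obj M)) ∧
      Module.Finite R ((R ⧸ 𝔞) →ₗ[R] ((localCohomology 𝔞 (t + 1)).obj M)) ∧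
      Module.Finite R
        (extModule R 1 (ModuleCat.of R (R ⧸ 𝔞)) ((localCohomology 𝔞 (t + 1)).obj M)) ∧
      (associatedPrimes R ((localCohomology 𝔞 (t + 1)).obj M)).Finite :=
  stmt10_general 𝔞 M t
    (fun j _ => (hasFiniteExt_iff_extModule M j).1 (HasFiniteExt.of_finite j)) h
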